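/- Let K ∈ ℝ, m₀ ∈ ℝ, q₀ = m₀/π, and M > 0. Suppose φ is C¹ on the closure of the semi-infinite cylinder C_K = {x ∈ ℝ³ : x₁² + x₂² < 1, x₃ > K} and satisfies: (i) ∫_{C_K} ∇φ · ∇ψ dx = 0 for every C¹ function ψ : ℝ³ → ℝ with compact support contained in {x₃ > K} (the weak formulation of Δφ = 0 in C_K with the slip condition ∇φ · n = 0 on the lateral boundary {x₁² + x₂² = 1, x₃ > K}); (ii) ∫_{B₁(0)} ∂₃φ(x′, t) dx′ = m₀ for every t > K; (iii) sup_{C_K} |∇φ| ≤ M. Then there exist constants C > 0 and d > 0, depending only on M and m₀, such that |∇φ(x) − (0, 0, q₀)| ≤ C e^{−d (x₃ − K)} for all x ∈ C_K with x₃ > K + 1. -/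

import Mathlib

open Real Set MeasureTheory

/-- Gradient of a scalar function on ℝ³. -/
noncomputable def grad3 (φ : (Fin 3 → ℝ) → ℝ) (x : Fin 3 → ℝ) : Fin 3 → ℝ :=
  fun i => fderiv ℝ φ x (Pi.single i 1)

/-- Euclidean length of a vector of ℝ³. -/
noncomputable def norm3 (u : Fin 3 → ℝ) : ℝ := Real.sqrt (∑ i, (u i) ^ 2)

/-- The open unit disk in ℝ². -/
def diskSet : Set (Fin 2 → ℝ) := {x' | (x' 0) ^ 2 + (x' 1) ^ 2 < 1}

/-- The semi-infinite open cylinder C_K = {x : x₁² + x₂² < 1, x₃ > K}. -/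
def cylFrom (K : ℝ) : Set (Fin 3 → ℝ) := {x | (x 0) ^ 2 + (x 1) ^ 2 < 1 ∧ K < x 2}

open Filter Topology
open scoped Matrix

/-!
A screw motion maps the cylinder into itself, so the difference between a slip solution and its
composition with a screw motion is again harmonic with Neumann condition, and it is bounded by `M`
times the displacement. Comparison with `C²` barriers shows that the oscillation of a bounded
Neumann harmonic function drops by a fixed factor over each two units of length. Dividing by the
time of the motion and letting it tend to `0`, the vertical and the angular derivative have
exponentially small oscillation. The flux is `π` times a mean of the vertical derivative, which
identifies its limit, and the angular derivative vanishes on the axis.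

The remaining horizontal derivatives need not come from symmetries of the cylinder. At a point of
height `z` they are the derivatives along `x - p`, with `p` in the cross section of height `z`, and
these are limits of harmonic difference quotients along dilations with center `p`. On the lateral
boundary the radial derivative vanishes, so there `∇φ · (x - p)` is a combination of the vertical
and angular derivatives, hence close to `q₀ (x₃ - z)`; comparison with this linear function and a
barrier that grows like `cosh (x₃ - z)` gives the bound in the cross section.
-/

section Calculus

variable {n : ℕ} {f g : (Fin n → ℝ) → ℝ} {x : Fin n → ℝ} {U : Set (Fin n → ℝ)}

/-- The partial derivative `∂f/∂xᵢ` (junk value `0` where `f` is not differentiable). -/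
noncomputable def pderiv (i : Fin n) (f : (Fin n → ℝ) → ℝ) (x : Fin n → ℝ) : ℝ :=
  fderiv ℝ f x (Pi.single i 1)

/-- The pointwise Euclidean inner product `∇f · ∇g` of two gradients. -/
noncomputable def gradDot (f g : (Fin n → ℝ) → ℝ) (x : Fin n → ℝ) : ℝ :=
  ∑ i, pderiv i f x * pderiv i g x

/-- The Laplacian `∑ᵢ ∂²f/∂xᵢ²`. It is defined by coordinates because `Fin n → ℝ`
carries the sup norm. -/
noncomputable def lap (f : (Fin n → ℝ) → ℝ) (x : Fin n → ℝ) : ℝ := ∑ i, pderiv i (pderiv i f) x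

lemma fderiv_apply_eq_sum_pderiv (f : (Fin n → ℝ) → ℝ) (x v : Fin n → ℝ) :
    fderiv ℝ f x v = ∑ i, v i * pderiv i f x := by
  conv_lhs => rw [pi_eq_sum_univ' v]
  simp only [map_sum, map_smul, smul_eq_mul, pderiv]

lemma pderiv_eq_of_hasFDerivAt {f' : (Fin n → ℝ) →L[ℝ] ℝ} (h : HasFDerivAt f f' x) (i : Fin n) :
    pderiv i f x = f' (Pi.single i 1) := by
  rw [pderiv, h.fderiv]

lemma pderiv_eq_zero_of_notMem_tsupport (hx : x ∉ tsupport f) (i : Fin n) : pderiv i f x = 0 := by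
  rw [pderiv, fderiv_of_notMem_tsupport ℝ hx, zero_apply]

lemma gradDot_eq_zero_of_notMem_tsupport (hx : x ∉ tsupport g) : gradDot f g x = 0 :=
  Finset.sum_eq_zero fun i _ => by rw [pderiv_eq_zero_of_notMem_tsupport hx, mul_zero]

lemma contDiff_pderiv {m k : WithTop ℕ∞} (hf : ContDiff ℝ k f) (hmk : m + 1 ≤ k) (i : Fin n) :
    ContDiff ℝ m (pderiv i f) :=
  (hf.fderiv_right hmk).clm_apply contDiff_const

lemma continuous_pderiv (hf : ContDiff ℝ 1 f) (i : Fin n) : Continuous (pderiv i f) :=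
  (hf.continuous_fderiv one_ne_zero).clm_apply continuous_const

lemma continuousOn_pderiv (hU : IsOpen U) (hf : ContDiffOn ℝ 1 f U) (i : Fin n) :
    ContinuousOn (pderiv i f) U :=
  (hf.continuousOn_fderiv_of_isOpen hU le_rfl).clm_apply continuousOn_const

lemma continuous_lap (hf : ContDiff ℝ 2 f) : Continuous (lap f) :=
  continuous_finsetSum _ fun i _ =>
    continuous_pderiv (contDiff_pderiv hf one_add_one_eq_two.le i) i

lemma pderiv_const (c : ℝ) (i : Fin n) : pderiv i (fun _ => c) = fun _ => 0 :=
  funext fun x => pderiv_eq_of_hasFDerivAt (hasFDerivAt_const c x) i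

lemma lap_const (c : ℝ) (x : Fin n → ℝ) : lap (fun _ => c) x = 0 := by
  simp only [lap, pderiv_const, Finset.sum_const_zero]

lemma pderiv_add (hf : DifferentiableAt ℝ f x) (hg : DifferentiableAt ℝ g x) (i : Fin n) :
    pderiv i (fun y => f y + g y) x = pderiv i f x + pderiv i g x :=
  pderiv_eq_of_hasFDerivAt (hf.hasFDerivAt.fun_add hg.hasFDerivAt) i

lemma pderiv_sub (hf : DifferentiableAt ℝ f x) (hg : DifferentiableAt ℝ g x) (i : Fin n) :
    pderiv i (fun y => f y - g y) x = pderiv i f x - pderiv i g x :=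
  pderiv_eq_of_hasFDerivAt (hf.hasFDerivAt.fun_sub hg.hasFDerivAt) i

lemma pderiv_const_mul (hf : DifferentiableAt ℝ f x) (c : ℝ) (i : Fin n) :
    pderiv i (fun y => c * f y) x = c * pderiv i f x :=
  pderiv_eq_of_hasFDerivAt (hf.hasFDerivAt.const_mul c) i

lemma pderiv_mul (hf : DifferentiableAt ℝ f x) (hg : DifferentiableAt ℝ g x) (i : Fin n) :
    pderiv i (fun y => f y * g y) x = f x * pderiv i g x + g x * pderiv i f x :=
  pderiv_eq_of_hasFDerivAt (hf.hasFDerivAt.fun_mul hg.hasFDerivAt) i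

lemma pderiv_comp {G : ℝ → ℝ} {G' : ℝ} (hG : HasDerivAt G G' (f x)) (hf : DifferentiableAt ℝ f x)
    (i : Fin n) : pderiv i (fun y => G (f y)) x = G' * pderiv i f x :=
  pderiv_eq_of_hasFDerivAt (hG.comp_hasFDerivAt x hf.hasFDerivAt) i

lemma gradDot_sub_left {h : (Fin n → ℝ) → ℝ} (hf : DifferentiableAt ℝ f x)
    (hg : DifferentiableAt ℝ g x) :
    gradDot (fun y => f y - g y) h x = gradDot f h x - gradDot g h x := by
  simp only [gradDot, pderiv_sub hf hg, sub_mul, Finset.sum_sub_distrib]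

lemma gradDot_const_mul_left (hf : DifferentiableAt ℝ f x) (c : ℝ) :
    gradDot (fun y => c * f y) g x = c * gradDot f g x := by
  simp only [gradDot, pderiv_const_mul hf, mul_assoc, Finset.mul_sum]

lemma gradDot_comp_right {G : ℝ → ℝ} {G' : ℝ} (hG : HasDerivAt G G' (g x))
    (hg : DifferentiableAt ℝ g x) : gradDot f (fun y => G (g y)) x = G' * gradDot f g x := by
  simp only [gradDot, pderiv_comp hG hg, mul_left_comm, Finset.mul_sum]

lemma gradDot_self_nonneg (f : (Fin n → ℝ) → ℝ) (x : Fin n → ℝ) : 0 ≤ gradDot f f x :=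
  Finset.sum_nonneg fun _ _ => mul_self_nonneg _

lemma lap_sub (hf : ContDiff ℝ 2 f) (hg : ContDiff ℝ 2 g) (x : Fin n → ℝ) :
    lap (fun y => f y - g y) x = lap f x - lap g x := by
  have hfg (i : Fin n) : pderiv i (fun y => f y - g y) = fun y => pderiv i f y - pderiv i g y :=
    funext fun y => pderiv_sub (hf.differentiable two_ne_zero y) (hg.differentiable two_ne_zero y) i
  have hd {k : (Fin n → ℝ) → ℝ} (hk : ContDiff ℝ 2 k) (i : Fin n) :
      DifferentiableAt ℝ (pderiv i k) x :=
    (contDiff_pderiv hk one_add_one_eq_two.le i).differentiable one_ne_zero x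
  simp only [lap, hfg, pderiv_sub (hd hf _) (hd hg _), Finset.sum_sub_distrib]

lemma lap_mul (hf : ContDiff ℝ 2 f) (hg : ContDiff ℝ 2 g) (x : Fin n → ℝ) :
    lap (fun y => f y * g y) x = f x * lap g x + 2 * gradDot f g x + g x * lap f x := by
  have hf1 := hf.differentiable two_ne_zero
  have hg1 := hg.differentiable two_ne_zero
  have hd {k : (Fin n → ℝ) → ℝ} (hk : ContDiff ℝ 2 k) (i : Fin n) :
      DifferentiableAt ℝ (pderiv i k) x :=
    (contDiff_pderiv hk one_add_one_eq_two.le i).differentiable one_ne_zero x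
  have hfg (i : Fin n) : pderiv i (fun y => f y * g y) =
      fun y => f y * pderiv i g y + g y * pderiv i f y :=
    funext fun y => pderiv_mul (hf1 y) (hg1 y) i
  simp only [lap, gradDot, hfg, Finset.mul_sum, ← Finset.sum_add_distrib]
  refine Finset.sum_congr rfl fun i _ => ?_
  rw [pderiv_add ((hf1 x).fun_mul (hd hg i)) ((hg1 x).fun_mul (hd hf i)),
    pderiv_mul (hf1 x) (hd hg i), pderiv_mul (hg1 x) (hd hf i)]
  ring

lemma lap_const_mul (hf : ContDiff ℝ 2 f) (c : ℝ) (x : Fin n → ℝ) :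
    lap (fun y => c * f y) x = c * lap f x := by
  have hc (i : Fin n) : pderiv i (fun y => c * f y) = fun y => c * pderiv i f y :=
    funext fun y => pderiv_const_mul (hf.differentiable two_ne_zero y) c i
  simp only [lap, hc, Finset.mul_sum]
  exact Finset.sum_congr rfl fun i _ => pderiv_const_mul
    ((contDiff_pderiv hf one_add_one_eq_two.le i).differentiable one_ne_zero x) c i

lemma lap_comp {G G' G'' : ℝ → ℝ} (hG : ∀ t, HasDerivAt G (G' t) t)
    (hG' : ∀ t, HasDerivAt G' (G'' t) t) (hf : ContDiff ℝ 2 f) (x : Fin n → ℝ) :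
    lap (fun y => G (f y)) x = G'' (f x) * gradDot f f x + G' (f x) * lap f x := by
  have hf1 := hf.differentiable two_ne_zero
  have hGf (i : Fin n) : pderiv i (fun y => G (f y)) = fun y => G' (f y) * pderiv i f y :=
    funext fun y => pderiv_comp (hG _) (hf1 y) i
  simp only [lap, gradDot, hGf, Finset.mul_sum, ← Finset.sum_add_distrib]
  refine Finset.sum_congr rfl fun i _ => ?_
  rw [pderiv_mul (f := fun y => G' (f y))
    ((hG' _).comp_hasFDerivAt x (hf1 x).hasFDerivAt).differentiableAt
    ((contDiff_pderiv hf one_add_one_eq_two.le i).differentiable one_ne_zero x),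
    pderiv_comp (hG' _) (hf1 x)]
  ring

lemma pderiv_apply (i j : Fin n) (x : Fin n → ℝ) :
    pderiv i (fun y => y j) x = if i = j then 1 else 0 := by
  rw [pderiv_eq_of_hasFDerivAt (hasFDerivAt_apply j x), ContinuousLinearMap.proj_apply,
    Pi.single_apply]
  exact if_congr eq_comm rfl rfl

lemma pderiv_comp_apply {G : ℝ → ℝ} {G' : ℝ} {j : Fin n} (hG : HasDerivAt G G' (x j)) (i : Fin n) :
    pderiv i (fun y => G (y j)) x = if i = j then G' else 0 := by
  rw [pderiv_comp hG (differentiableAt_apply j x), pderiv_apply, mul_ite, mul_one, mul_zero]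

lemma lap_comp_apply {G G' G'' : ℝ → ℝ} (hG : ∀ t, HasDerivAt G (G' t) t)
    (hG' : ∀ t, HasDerivAt G' (G'' t) t) (j : Fin n) (x : Fin n → ℝ) :
    lap (fun y => G (y j)) x = G'' (x j) := by
  have hcoord (i : Fin n) : pderiv i (fun y : Fin n → ℝ => y j) = fun _ => if i = j then 1 else 0 :=
    funext (pderiv_apply i j)
  have hlap : lap (fun y : Fin n → ℝ => y j) x = 0 := by
    simp only [lap, hcoord, pderiv_const, Finset.sum_const_zero]
  rw [lap_comp hG hG' (contDiff_apply ℝ ℝ j), hlap]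
  simp [gradDot, hcoord]

/-- The squared Euclidean distance `|x - p|²` on `Fin n → ℝ`, whose own metric is the sup metric. -/
def sqDist (p x : Fin n → ℝ) : ℝ := ∑ j, (x j - p j) ^ 2

lemma contDiff_sqDist (p : Fin n → ℝ) {k : WithTop ℕ∞} : ContDiff ℝ k (sqDist p) := by
  unfold sqDist
  fun_prop

lemma sqDist_nonneg (p x : Fin n → ℝ) : 0 ≤ sqDist p x := Finset.sum_nonneg fun _ _ => sq_nonneg _

lemma hasFDerivAt_dotProduct_sub (d p x : Fin n → ℝ) :
    HasFDerivAt (fun y => d ⬝ᵥ (y - p))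
      (∑ j, d j • (ContinuousLinearMap.proj j : (Fin n → ℝ) →L[ℝ] ℝ)) x :=
  HasFDerivAt.fun_sum fun j _ => ((hasFDerivAt_apply j x).sub_const (p j)).const_mul (d j)

lemma pderiv_dotProduct_sub (d p x : Fin n → ℝ) (i : Fin n) :
    pderiv i (fun y => d ⬝ᵥ (y - p)) x = d i := by
  rw [pderiv_eq_of_hasFDerivAt (hasFDerivAt_dotProduct_sub d p x)]
  simp [Pi.single_apply]

lemma pderiv_sqDist (p x : Fin n → ℝ) (i : Fin n) : pderiv i (sqDist p) x = 2 * (x i - p i) := by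
  have h : HasFDerivAt (sqDist p)
      (∑ j, (2 * (x j - p j)) • (ContinuousLinearMap.proj j : (Fin n → ℝ) →L[ℝ] ℝ)) x :=
    HasFDerivAt.fun_sum fun j _ => by
      simpa using ((hasFDerivAt_apply j x).sub_const (p j)).pow 2
  rw [pderiv_eq_of_hasFDerivAt h]
  simp [Pi.single_apply]

lemma gradDot_sqDist_self (p x : Fin n → ℝ) : gradDot (sqDist p) (sqDist p) x = 4 * sqDist p x := by
  simp only [gradDot, pderiv_sqDist, sqDist, Finset.mul_sum]
  exact Finset.sum_congr rfl fun _ _ => by ring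

lemma lap_dotProduct_sub (d p x : Fin n → ℝ) : lap (fun y => d ⬝ᵥ (y - p)) x = 0 := by
  have (i : Fin n) : pderiv i (fun y => d ⬝ᵥ (y - p)) = fun _ => d i :=
    funext fun y => pderiv_dotProduct_sub d p y i
  simp only [lap, this, pderiv_const, Finset.sum_const_zero]

lemma lap_sqDist (p x : Fin n → ℝ) : lap (sqDist p) x = 2 * n := by
  have h (i : Fin n) : pderiv i (pderiv i (sqDist p)) x = 2 := by
    have : pderiv i (sqDist p) = fun y => ((2 : ℝ) • Pi.single i 1 : Fin n → ℝ) ⬝ᵥ (y - p) := by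
      funext y
      simp [pderiv_sqDist, mul_sub]
    rw [this, pderiv_dotProduct_sub]
    simp
  simp [lap, h, mul_comm]

end Calculus

section WeaklyHarmonic

variable {n : ℕ} {u v s f g ψ : (Fin n → ℝ) → ℝ} {U V B C : Set (Fin n → ℝ)}

/-- A `C¹` function which satisfies `Δu = 0` on the open set `U` in the weak sense. -/
structure IsWeaklyHarmonicOn (U : Set (Fin n → ℝ)) (u : (Fin n → ℝ) → ℝ) : Prop where
  contDiffOn : ContDiffOn ℝ 1 u U
  integral_eq_zero : ∀ ψ : (Fin n → ℝ) → ℝ, ContDiff ℝ 1 ψ → HasCompactSupport ψ →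
    tsupport ψ ⊆ U → ∫ x, gradDot u ψ x = 0

lemma integrable_gradDot (hU : IsOpen U) (hf : ContDiffOn ℝ 1 f U) (hψ : ContDiff ℝ 1 ψ)
    (hc : HasCompactSupport ψ) (hs : tsupport ψ ⊆ U) : Integrable (gradDot f ψ) := by
  have hcont : Continuous (gradDot f ψ) := by
    rw [continuous_iff_continuousAt]
    intro x
    by_cases hx : x ∈ U
    · exact tendsto_finsetSum _ fun i _ =>
        ((continuousOn_pderiv hU hf i).continuousAt (hU.mem_nhds hx)).mul
          (continuous_pderiv hψ i).continuousAt
    · refine (continuousAt_const (y := (0 : ℝ))).congr ?_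
      filter_upwards [(isClosed_tsupport ψ).isOpen_compl.mem_nhds fun h => hx (hs h)] with y hy
      exact (gradDot_eq_zero_of_notMem_tsupport hy).symm
  refine hcont.integrable_of_hasCompactSupport (hc.mono' fun x hx => ?_)
  by_contra hn
  exact hx (gradDot_eq_zero_of_notMem_tsupport hn)

lemma integral_gradDot_eq_neg_integral_lap_mul (hs : ContDiff ℝ 2 s) (hψ : ContDiff ℝ 1 ψ)
    (hc : HasCompactSupport ψ) : ∫ x, gradDot s ψ x = -∫ x, lap s x * ψ x := by
  have hds (i : Fin n) : ContDiff ℝ 1 (pderiv i s) := contDiff_pderiv hs one_add_one_eq_two.le i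
  have h1 (i : Fin n) : Integrable (fun x => pderiv i s x * pderiv i ψ x) :=
    ((hds i).continuous.mul (continuous_pderiv hψ i)).integrable_of_hasCompactSupport
      (hc.fderiv_apply ℝ (Pi.single i 1)).mul_left
  have h2 (i : Fin n) : Integrable (fun x => pderiv i (pderiv i s) x * ψ x) :=
    ((continuous_pderiv (hds i) i).mul hψ.continuous).integrable_of_hasCompactSupport hc.mul_left
  have h3 (i : Fin n) : Integrable (fun x => pderiv i s x * ψ x) :=
    ((hds i).continuous.mul hψ.continuous).integrable_of_hasCompactSupport hc.mul_left
  simp only [gradDot, lap, Finset.sum_mul]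
  rw [integral_finsetSum _ fun i _ => h1 i, integral_finsetSum _ fun i _ => h2 i,
    ← Finset.sum_neg_distrib]
  exact Finset.sum_congr rfl fun i _ =>
    integral_mul_fderiv_eq_neg_fderiv_mul_of_integrable (h2 i) (h1 i) (h3 i)
      (fun x _ => (hds i).differentiable one_ne_zero x)
      (fun x _ => hψ.differentiable one_ne_zero x)

lemma isWeaklyHarmonicOn_of_lap_eq_zero (hs : ContDiff ℝ 2 s) (hlap : ∀ x, lap s x = 0) :
    IsWeaklyHarmonicOn U s where
  contDiffOn := (hs.of_le one_le_two).contDiffOn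
  integral_eq_zero ψ hψ hc _ := by
    simp only [integral_gradDot_eq_neg_integral_lap_mul hs hψ hc, hlap, zero_mul, integral_zero,
      neg_zero]

lemma isWeaklyHarmonicOn_const (c : ℝ) : IsWeaklyHarmonicOn U fun _ => c :=
  isWeaklyHarmonicOn_of_lap_eq_zero contDiff_const (lap_const c)

namespace IsWeaklyHarmonicOn

lemma mono (hu : IsWeaklyHarmonicOn U u) (h : V ⊆ U) : IsWeaklyHarmonicOn V u :=
  ⟨hu.contDiffOn.mono h, fun ψ hψ hc hs => hu.integral_eq_zero ψ hψ hc (hs.trans h)⟩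

lemma contDiffAt (hu : IsWeaklyHarmonicOn U u) (hU : IsOpen U) {x : Fin n → ℝ} (hx : x ∈ U) :
    ContDiffAt ℝ 1 u x :=
  hu.contDiffOn.contDiffAt (hU.mem_nhds hx)

lemma differentiableAt (hu : IsWeaklyHarmonicOn U u) (hU : IsOpen U) {x : Fin n → ℝ}
    (hx : x ∈ U) : DifferentiableAt ℝ u x :=
  (hu.contDiffAt hU hx).differentiableAt one_ne_zero

lemma sub (hU : IsOpen U) (hu : IsWeaklyHarmonicOn U u) (hv : IsWeaklyHarmonicOn U v) :
    IsWeaklyHarmonicOn U fun x => u x - v x where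
  contDiffOn := hu.contDiffOn.sub hv.contDiffOn
  integral_eq_zero ψ hψ hc hs := by
    have (x : Fin n → ℝ) : gradDot (fun x => u x - v x) ψ x = gradDot u ψ x - gradDot v ψ x := by
      by_cases hx : x ∈ tsupport ψ
      · exact gradDot_sub_left (hu.differentiableAt hU (hs hx)) (hv.differentiableAt hU (hs hx))
      · simp only [gradDot_eq_zero_of_notMem_tsupport hx, sub_zero]
    simp only [this]
    rw [integral_sub (integrable_gradDot hU hu.contDiffOn hψ hc hs)
      (integrable_gradDot hU hv.contDiffOn hψ hc hs), hu.integral_eq_zero ψ hψ hc hs,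
      hv.integral_eq_zero ψ hψ hc hs, sub_zero]

lemma const_mul (hU : IsOpen U) (hu : IsWeaklyHarmonicOn U u) (c : ℝ) :
    IsWeaklyHarmonicOn U fun x => c * u x where
  contDiffOn := contDiffOn_const.mul hu.contDiffOn
  integral_eq_zero ψ hψ hc hs := by
    have (x : Fin n → ℝ) : gradDot (fun x => c * u x) ψ x = c * gradDot u ψ x := by
      by_cases hx : x ∈ tsupport ψ
      · exact gradDot_const_mul_left (hu.differentiableAt hU (hs hx)) c
      · simp only [gradDot_eq_zero_of_notMem_tsupport hx, mul_zero]
    simp only [this]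
    rw [integral_const_mul, hu.integral_eq_zero ψ hψ hc hs, mul_zero]

end IsWeaklyHarmonicOn

lemma hasDerivAt_expNegInvGlue (t : ℝ) :
    HasDerivAt expNegInvGlue (t⁻¹ ^ 2 * expNegInvGlue t) t := by
  simpa using expNegInvGlue.hasDerivAt_polynomial_eval_inv_mul 1 t

/-- A smooth substitute for the positive part `(m - f)⁺` on `B`, extended by zero: the test function
which detects where `f` falls below the level `m`. -/
noncomputable def truncation (B : Set (Fin n → ℝ)) (m : ℝ) (f : (Fin n → ℝ) → ℝ) :
    (Fin n → ℝ) → ℝ :=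
  B.indicator fun x => expNegInvGlue (m - f x)

variable {m : ℝ} {x : Fin n → ℝ}

lemma truncation_nonneg (x : Fin n → ℝ) : 0 ≤ truncation B m f x :=
  indicator_nonneg (fun _ _ => expNegInvGlue.nonneg _) x

lemma truncation_pos (hx : x ∈ B) (hfx : f x < m) : 0 < truncation B m f x := by
  rw [truncation, indicator_of_mem hx]
  exact expNegInvGlue.pos_of_pos (sub_pos.2 hfx)

lemma truncation_eq_zero (hm : ∀ x ∈ B \ C, m ≤ f x) (hx : x ∉ C) : truncation B m f x = 0 := by
  by_cases hxB : x ∈ B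
  · rw [truncation, indicator_of_mem hxB]
    exact expNegInvGlue.zero_of_nonpos (sub_nonpos.2 (hm x ⟨hxB, hx⟩))
  · exact indicator_of_notMem hxB _

lemma tsupport_truncation_subset (hC : IsClosed C) (hm : ∀ x ∈ B \ C, m ≤ f x) :
    tsupport (truncation B m f) ⊆ C :=
  closure_minimal (fun _ hx => not_not.1 fun hn => hx (truncation_eq_zero hm hn)) hC

lemma truncation_eventuallyEq (hB : IsOpen B) (hx : x ∈ B) :
    truncation B m f =ᶠ[𝓝 x] fun y => expNegInvGlue (m - f y) := by
  filter_upwards [hB.mem_nhds hx] with y hy using indicator_of_mem hy _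

lemma contDiff_truncation (hB : IsOpen B) (hC : IsClosed C) (hCB : C ⊆ B)
    (hm : ∀ x ∈ B \ C, m ≤ f x) (hf : ContDiffOn ℝ 1 f B) :
    ContDiff ℝ 1 (truncation B m f) := by
  rw [contDiff_iff_contDiffAt]
  intro x
  by_cases hx : x ∈ B
  · exact (expNegInvGlue.contDiff.contDiffAt.comp x
      (contDiffAt_const.sub (hf.contDiffAt (hB.mem_nhds hx)))).congr_of_eventuallyEq
        (truncation_eventuallyEq hB hx)
  · refine (contDiffAt_const (c := (0 : ℝ))).congr_of_eventuallyEq ?_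
    filter_upwards [hC.isOpen_compl.mem_nhds fun h => hx (hCB h)] with y hy
    exact truncation_eq_zero hm hy

lemma gradDot_truncation (hB : IsOpen B) (hx : x ∈ B) (hf : DifferentiableAt ℝ f x) :
    gradDot g (truncation B m f) x =
      -((m - f x)⁻¹ ^ 2 * expNegInvGlue (m - f x)) * gradDot g f x := by
  have hG : HasDerivAt (fun t => expNegInvGlue (m - t))
      (-((m - f x)⁻¹ ^ 2 * expNegInvGlue (m - f x))) (f x) :=
    HasDerivAt.comp_const_sub m (f x) (hasDerivAt_expNegInvGlue (m - f x))
  rw [← gradDot_comp_right hG hf]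
  simp only [gradDot, pderiv, (truncation_eventuallyEq hB hx).fderiv_eq]

namespace IsWeaklyHarmonicOn

theorem le_sub_of_lap_pos (hB : IsOpen B) (hu : IsWeaklyHarmonicOn B u) (hs : ContDiff ℝ 2 s)
    (hlap : ∀ x ∈ B, 0 < lap s x) (hC : IsCompact C) (hCB : C ⊆ B)
    (hm : ∀ x ∈ B \ C, m ≤ u x - s x) : ∀ x ∈ B, m ≤ u x - s x := by
  intro x₀ hx₀
  by_contra! hlt
  have hs1 : ContDiff ℝ 1 s := hs.of_le one_le_two
  have hf1 : ContDiffOn ℝ 1 (fun x => u x - s x) B := hu.contDiffOn.sub hs1.contDiffOn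
  set f : (Fin n → ℝ) → ℝ := fun x => u x - s x
  set ψ := truncation B m f
  have hψ : ContDiff ℝ 1 ψ := contDiff_truncation hB hC.isClosed hCB hm hf1
  have hsupp : tsupport ψ ⊆ C := tsupport_truncation_subset hC.isClosed hm
  have hψc : HasCompactSupport ψ := hC.of_isClosed_subset (isClosed_tsupport ψ) hsupp
  have hgrad (x : Fin n → ℝ) : gradDot f ψ x = gradDot u ψ x - gradDot s ψ x := by
    by_cases hx : x ∈ B
    · exact gradDot_sub_left (hu.differentiableAt hB hx) (hs1.differentiable one_ne_zero x)
    · have hx' : x ∉ tsupport ψ := fun h => hx (hCB (hsupp h))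
      simp only [gradDot_eq_zero_of_notMem_tsupport hx', sub_zero]
  have heq : ∫ x, gradDot f ψ x = ∫ x, lap s x * ψ x := by
    simp only [hgrad]
    rw [integral_sub (integrable_gradDot hB hu.contDiffOn hψ hψc (hsupp.trans hCB))
      (integrable_gradDot isOpen_univ hs1.contDiffOn hψ hψc (subset_univ _)),
      hu.integral_eq_zero ψ hψ hψc (hsupp.trans hCB),
      integral_gradDot_eq_neg_integral_lap_mul hs hψ hψc, zero_sub, neg_neg]
  have hle : ∫ x, gradDot f ψ x ≤ 0 := by
    refine integral_nonpos fun x => ?_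
    by_cases hx : x ∈ B
    · have hfx := (hf1.contDiffAt (hB.mem_nhds hx)).differentiableAt one_ne_zero
      rw [Pi.zero_apply, gradDot_truncation hB hx hfx, neg_mul, neg_nonpos]
      exact mul_nonneg (mul_nonneg (sq_nonneg _) (expNegInvGlue.nonneg _)) (gradDot_self_nonneg f x)
    · exact (gradDot_eq_zero_of_notMem_tsupport fun h => hx (hCB (hsupp h))).le
  have hpos : 0 < ∫ x, lap s x * ψ x := by
    refine Continuous.integral_pos_of_hasCompactSupport_nonneg_nonzero (x := x₀)
      ((continuous_lap hs).mul hψ.continuous) hψc.mul_left (fun x => ?_)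
      (mul_pos (hlap x₀ hx₀) (truncation_pos hx₀ hlt)).ne'
    by_cases hx : x ∈ B
    · exact mul_nonneg (hlap x hx).le (truncation_nonneg x)
    · simp [ψ, truncation, hx]
  linarith

theorem not_isLocalMin_sub (hU : IsOpen U) (hu : IsWeaklyHarmonicOn U u) (hs : ContDiff ℝ 2 s)
    (hx : x ∈ U) (hlap : 0 < lap s x) : ¬IsLocalMin (fun y => u y - s y) x := by
  intro hmin
  -- Subtracting `η |y - x|²` from `s` makes the minimum strict.
  set η : ℝ := lap s x / (4 * n + 1)
  have hη : 0 < η := by positivity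
  have hq : ContDiff ℝ 2 fun y => η * sqDist x y := contDiff_const.mul (contDiff_sqDist x)
  have hlap' : 0 < lap (fun y => s y - η * sqDist x y) x := by
    rw [lap_sub hs hq, lap_const_mul (contDiff_sqDist x), lap_sqDist, sub_pos, div_mul_eq_mul_div,
      div_lt_iff₀ (by positivity)]
    nlinarith
  obtain ⟨R, hR, hball⟩ := Metric.eventually_nhds_iff_ball.1 <|
    ((hU.eventually_mem hx).and hmin).and
      ((continuous_lap (hs.sub hq)).continuousAt.eventually (lt_mem_nhds hlap'))
  have hout (y) (hy : y ∈ Metric.ball x R \ Metric.closedBall x (R / 2)) :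
      u x - s x + η * (R / 2) ^ 2 ≤ u y - (s y - η * sqDist x y) := by
    have hdist : (R / 2) ^ 2 ≤ sqDist x y := by
      by_contra! hlt
      refine hy.2 ((dist_pi_le_iff (by positivity)).2 fun i => ?_)
      have hi : (y i - x i) ^ 2 ≤ sqDist x y :=
        Finset.single_le_sum (f := fun j => (y j - x j) ^ 2) (fun j _ => sq_nonneg _)
          (Finset.mem_univ i)
      exact abs_le_of_sq_le_sq (hi.trans hlt.le) (by positivity)
    have := (hball y hy.1).1.2
    nlinarith
  have := (hu.mono fun y hy => (hball y hy).1.1).le_sub_of_lap_pos Metric.isOpen_ball (hs.sub hq)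
    (fun y hy => (hball y hy).2) (isCompact_closedBall x (R / 2))
    (Metric.closedBall_subset_ball (by linarith)) hout x (Metric.mem_ball_self hR)
  have hself : sqDist x x = 0 := by simp [sqDist]
  rw [hself] at this
  nlinarith [pow_pos (half_pos hR) 2]

/-- On the part `Q \ V` of the boundary the inequality is only required at points where `u - s` is
minimal, which covers Neumann as well as Dirichlet conditions. -/
theorem le_of_lap_pos_of_isMinOn {Q : Set (Fin n → ℝ)} (hQ : IsCompact Q) (hV : IsOpen V)
    (hVQ : V ⊆ Q) (hcont : ContinuousOn u Q) (hu : IsWeaklyHarmonicOn V u) (hs : ContDiff ℝ 2 s)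
    (hint : ∀ x ∈ V, s x ≤ u x ∨ 0 < lap s x)
    (hbd : ∀ x ∈ Q \ V, IsMinOn (fun y => u y - s y) Q x → s x ≤ u x) :
    ∀ x ∈ Q, s x ≤ u x := by
  intro x hx
  obtain ⟨y, hy, hmin⟩ := hQ.exists_isMinOn ⟨x, hx⟩ (hcont.sub hs.continuous.continuousOn)
  have hyx : u y - s y ≤ u x - s x := hmin hx
  suffices s y ≤ u y by linarith
  by_cases hyV : y ∈ V
  · refine (hint y hyV).resolve_right fun hlap => hu.not_isLocalMin_sub hV hs hyV hlap ?_
    exact hmin.isLocalMin (mem_of_superset (hV.mem_nhds hyV) hVQ)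
  · exact hbd y ⟨hy, hyV⟩ hmin

end IsWeaklyHarmonicOn

end WeaklyHarmonic

section Conformal

variable {n : ℕ} {u f g : (Fin n → ℝ) → ℝ} {U V : Set (Fin n → ℝ)} {A : Matrix (Fin n) (Fin n) ℝ}
  {c : ℝ}

lemma hasFDerivAt_mulVec_add (A : Matrix (Fin n) (Fin n) ℝ) (b x : Fin n → ℝ) :
    HasFDerivAt (fun y => A *ᵥ y + b) A.mulVecLin.toContinuousLinearMap x :=
  A.mulVecLin.toContinuousLinearMap.hasFDerivAt.add_const b

lemma contDiff_mulVec_add (A : Matrix (Fin n) (Fin n) ℝ) (b : Fin n → ℝ) {k : WithTop ℕ∞} :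
    ContDiff ℝ k fun y => A *ᵥ y + b :=
  A.mulVecLin.toContinuousLinearMap.contDiff.add contDiff_const

lemma gradDot_comp_mulVec_add (hA : A * Aᵀ = c • 1) (b : Fin n → ℝ) {x : Fin n → ℝ}
    (hf : DifferentiableAt ℝ f (A *ᵥ x + b)) (hg : DifferentiableAt ℝ g (A *ᵥ x + b)) :
    gradDot (fun y => f (A *ᵥ y + b)) (fun y => g (A *ᵥ y + b)) x =
      c * gradDot f g (A *ᵥ x + b) := by
  have hcomp {k : (Fin n → ℝ) → ℝ} (hk : DifferentiableAt ℝ k (A *ᵥ x + b)) :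
      (fun i => pderiv i (fun y => k (A *ᵥ y + b)) x) =
        Aᵀ *ᵥ fun j => pderiv j k (A *ᵥ x + b) := by
    funext i
    rw [pderiv_eq_of_hasFDerivAt (f := fun y => k (A *ᵥ y + b))
      (hk.hasFDerivAt.comp x (hasFDerivAt_mulVec_add A b x)) i]
    simp [fderiv_apply_eq_sum_pderiv, Matrix.mulVec, dotProduct]
  change (fun i => pderiv i _ x) ⬝ᵥ (fun i => pderiv i _ x) = _
  rw [hcomp hf, hcomp hg, Matrix.dotProduct_mulVec, Matrix.vecMul_transpose, Matrix.mulVec_mulVec,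
    hA, Matrix.smul_mulVec, Matrix.one_mulVec, smul_dotProduct, smul_eq_mul]
  rfl

lemma integral_comp_mulVec_add (hA : A.det ≠ 0) (b : Fin n → ℝ) (g : (Fin n → ℝ) → ℝ) :
    ∫ x, g (A *ᵥ x + b) = |A.det|⁻¹ * ∫ x, g x := by
  have hemb : MeasurableEmbedding (Matrix.toLin' A) :=
    (Matrix.toLin' A).continuous_of_finiteDimensional.measurableEmbedding
      (Matrix.mulVec_injective_of_isUnit ((Matrix.isUnit_iff_isUnit_det A).2 hA.isUnit))
  have h := hemb.integral_map (μ := volume) fun y => g (y + b)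
  rw [Real.map_matrix_volume_pi_eq_smul_volume_pi hA, integral_smul_measure,
    integral_add_right_eq_self fun x => g x, ENNReal.toReal_ofReal (abs_nonneg _), abs_inv] at h
  exact h.symm

/-- The affine map `x ↦ A x + b` as a homeomorphism, for a conformal matrix `A`. -/
noncomputable def conformalHomeomorph (hc : c ≠ 0) (hA : A * Aᵀ = c • 1) (b : Fin n → ℝ) :
    (Fin n → ℝ) ≃ₜ (Fin n → ℝ) where
  toFun x := A *ᵥ x + b
  invFun y := (c⁻¹ • Aᵀ) *ᵥ y + -((c⁻¹ • Aᵀ) *ᵥ b)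
  left_inv x := by
    have : c⁻¹ • Aᵀ * A = 1 := mul_eq_one_comm.1 (by rw [mul_smul_comm, hA, inv_smul_smul₀ hc])
    simp [Matrix.mulVec_add, Matrix.mulVec_mulVec, this]
  right_inv y := by
    have : A * (c⁻¹ • Aᵀ) = 1 := by rw [mul_smul_comm, hA, inv_smul_smul₀ hc]
    simp [Matrix.mulVec_neg, Matrix.mulVec_add, Matrix.mulVec_mulVec, this]
  continuous_toFun := (contDiff_mulVec_add A b (k := 0)).continuous
  continuous_invFun := (contDiff_mulVec_add _ _ (k := 0)).continuous

theorem IsWeaklyHarmonicOn.comp_conformal (hU : IsOpen U) (hu : IsWeaklyHarmonicOn U u)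
    (hc : c ≠ 0) (hA : A * Aᵀ = c • 1) (b : Fin n → ℝ) (hV : ∀ x ∈ V, A *ᵥ x + b ∈ U) :
    IsWeaklyHarmonicOn V fun x => u (A *ᵥ x + b) where
  contDiffOn := hu.contDiffOn.comp (contDiff_mulVec_add A b).contDiffOn hV
  integral_eq_zero ψ hψ hψc hψV := by
    set T := conformalHomeomorph hc hA b
    set ψ' : (Fin n → ℝ) → ℝ := ψ ∘ T.symm
    have hψ' : ContDiff ℝ 1 ψ' := hψ.comp (contDiff_mulVec_add _ _)
    have hψψ' : ψ = fun x => ψ' (A *ᵥ x + b) :=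
      funext fun x => (congrArg ψ (T.symm_apply_apply x)).symm
    have hsupp : tsupport ψ' = T.symm ⁻¹' tsupport ψ := tsupport_comp_eq_preimage ψ T.symm
    have hψ'U : tsupport ψ' ⊆ U := fun y hy => by
      rw [hsupp] at hy
      rw [← T.apply_symm_apply y]
      exact hV _ (hψV hy)
    have hdet : A.det ≠ 0 := (Matrix.isUnit_det_of_right_inverse (B := c⁻¹ • Aᵀ) (by
      rw [mul_smul_comm, hA, inv_smul_smul₀ hc])).ne_zero
    have hgrad (x : Fin n → ℝ) :
        gradDot (fun x => u (A *ᵥ x + b)) ψ x = c * gradDot u ψ' (A *ᵥ x + b) := by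
      by_cases hx : x ∈ tsupport ψ
      · conv_lhs => rw [hψψ']
        exact gradDot_comp_mulVec_add hA b (hu.differentiableAt hU (hV x (hψV hx)))
          (hψ'.differentiable one_ne_zero _)
      · have hx' : A *ᵥ x + b ∉ tsupport ψ' := by
          rw [hsupp]
          exact fun h => hx (T.symm_apply_apply x ▸ h)
        rw [gradDot_eq_zero_of_notMem_tsupport hx, gradDot_eq_zero_of_notMem_tsupport hx', mul_zero]
    simp only [hgrad]
    rw [integral_comp_mulVec_add hdet b fun y => c * gradDot u ψ' y, integral_const_mul,
      hu.integral_eq_zero ψ' hψ' (hψc.comp_homeomorph T.symm) hψ'U, mul_zero, mul_zero]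

end Conformal

section InteriorEstimate

variable {n : ℕ} {m d x : Fin n → ℝ} {a l : ℝ} {h : (Fin n → ℝ) → ℝ} {U : Set (Fin n → ℝ)}

lemma sqDist_eq_dotProduct (p x : Fin n → ℝ) : sqDist p x = (x - p) ⬝ᵥ (x - p) :=
  Finset.sum_congr rfl fun j _ => sq (x j - p j)

lemma dist_le_sqrt_sqDist (p x : Fin n → ℝ) : dist x p ≤ √(sqDist p x) :=
  (dist_pi_le_iff (sqrt_nonneg _)).2 fun i => abs_le_sqrt <|
    Finset.single_le_sum (f := fun i => (x i - p i) ^ 2) (fun _ _ => sq_nonneg _)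
      (Finset.mem_univ i)

lemma isCompact_sqDist_le (p : Fin n → ℝ) (m : ℝ) : IsCompact {x | sqDist p x ≤ m} :=
  (isCompact_closedBall p √m).of_isClosed_subset
    (isClosed_le (contDiff_sqDist p (k := 0)).continuous continuous_const)
    fun x hx => (dist_le_sqrt_sqDist p x).trans (sqrt_le_sqrt hx)

lemma contDiff_dotProduct_sub (d p : Fin n → ℝ) {k : WithTop ℕ∞} :
    ContDiff ℝ k fun y => d ⬝ᵥ (y - p) := by
  unfold dotProduct
  exact ContDiff.sum fun j _ => contDiff_const.mul ((contDiff_apply ℝ ℝ j).sub contDiff_const)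

/-- The orthogonal reflection of `Fin n → ℝ` in the hyperplane through `m` with normal `d`. -/
noncomputable def hyperplaneReflection (m d x : Fin n → ℝ) : Fin n → ℝ :=
  x - (2 / (d ⬝ᵥ d) * (d ⬝ᵥ (x - m))) • d

lemma hyperplaneReflection_eq_mulVec_add (m d x : Fin n → ℝ) :
    hyperplaneReflection m d x = (1 - (2 / (d ⬝ᵥ d)) • Matrix.vecMulVec d d) *ᵥ x +
      (2 / (d ⬝ᵥ d) * (d ⬝ᵥ m)) • d := by
  rw [hyperplaneReflection, Matrix.sub_mulVec, Matrix.one_mulVec, Matrix.smul_mulVec,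
    Matrix.vecMulVec_mulVec, op_smul_eq_smul, smul_smul, dotProduct_sub]
  module

lemma continuous_hyperplaneReflection (m d : Fin n → ℝ) :
    Continuous (hyperplaneReflection m d) := by
  simp only [funext (hyperplaneReflection_eq_mulVec_add m d)]
  exact (contDiff_mulVec_add _ _ (k := 0)).continuous

lemma sqDist_hyperplaneReflection (hd : d ⬝ᵥ d ≠ 0) (m x : Fin n → ℝ) :
    sqDist m (hyperplaneReflection m d x) = sqDist m x := by
  rw [sqDist_eq_dotProduct, sqDist_eq_dotProduct, hyperplaneReflection, sub_right_comm]
  simp only [sub_dotProduct, dotProduct_sub, smul_dotProduct, dotProduct_smul, smul_eq_mul,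
    dotProduct_comm _ d]
  field_simp
  ring

lemma hyperplaneReflection_add_half (hd : d ⬝ᵥ d ≠ 0) (m : Fin n → ℝ) :
    hyperplaneReflection m d (m + (1 / 2 : ℝ) • d) = m - (1 / 2 : ℝ) • d := by
  rw [hyperplaneReflection, add_sub_cancel_left, dotProduct_smul, smul_eq_mul,
    show 2 / (d ⬝ᵥ d) * (1 / 2 * (d ⬝ᵥ d)) = 1 by field_simp]
  module

lemma IsWeaklyHarmonicOn.comp_hyperplaneReflection {V : Set (Fin n → ℝ)} (hU : IsOpen U)
    (hh : IsWeaklyHarmonicOn U h) (hd : d ⬝ᵥ d ≠ 0)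
    (hV : ∀ x ∈ V, hyperplaneReflection m d x ∈ U) :
    IsWeaklyHarmonicOn V fun x => h (hyperplaneReflection m d x) := by
  simp only [hyperplaneReflection_eq_mulVec_add] at hV ⊢
  refine hh.comp_conformal hU one_ne_zero ?_ _ hV
  rw [Matrix.transpose_sub, Matrix.transpose_one, Matrix.transpose_smul, Matrix.transpose_vecMulVec,
    sub_mul, mul_sub, mul_sub, smul_mul_smul_comm, Matrix.vecMulVec_mul_vecMulVec,
    Matrix.vecMulVec_smul, smul_smul, one_mul, one_mul, mul_one,
    show 2 / (d ⬝ᵥ d) * (2 / (d ⬝ᵥ d)) * (d ⬝ᵥ d) = 2 / (d ⬝ᵥ d) + 2 / (d ⬝ᵥ d) by field_simp; ring]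
  module

/-- The comparison function on the half ball `{|x - m| ≤ a, d · (x - m) ≥ 0}`, where `|d| = l`: with
`r = d · (x - m) / (a l)` it is `(n + 1) (r² - r) - |x - m|² / a²`. -/
noncomputable def halfBallBarrier (m d : Fin n → ℝ) (a l : ℝ) (x : Fin n → ℝ) : ℝ :=
  (n + 1) * ((d ⬝ᵥ (x - m) / (a * l)) ^ 2 - d ⬝ᵥ (x - m) / (a * l)) - 1 / a ^ 2 * sqDist m x

lemma contDiff_halfBallBarrier : ContDiff ℝ 2 (halfBallBarrier m d a l) := by
  have := (contDiff_dotProduct_sub d m (k := 2)).div_const (a * l)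
  exact (contDiff_const.mul ((this.pow 2).sub this)).sub (contDiff_const.mul (contDiff_sqDist m))

lemma lap_halfBallBarrier (ha : 0 < a) (hl : 0 < l) (hd : d ⬝ᵥ d = l ^ 2) (x : Fin n → ℝ) :
    lap (halfBallBarrier m d a l) x = 2 / a ^ 2 := by
  have hlin := contDiff_dotProduct_sub d m (k := 2)
  have hG (t : ℝ) : HasDerivAt (fun t => (n + 1) * ((t / (a * l)) ^ 2 - t / (a * l)))
      ((n + 1) * (2 * (t / (a * l)) * (1 / (a * l)) - 1 / (a * l))) t := by
    have := (hasDerivAt_id' t).div_const (a * l)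
    simpa using (((this.fun_pow 2).sub this).const_mul (n + 1 : ℝ))
  have hG' (t : ℝ) : HasDerivAt
      (fun t => (n + 1) * (2 * (t / (a * l)) * (1 / (a * l)) - 1 / (a * l)))
      ((n + 1) * (2 * (1 / (a * l)) * (1 / (a * l)))) t :=
    (((((hasDerivAt_id' t).div_const (a * l)).const_mul 2).mul_const _).sub_const _).const_mul _
  have hgrad : gradDot (fun y => d ⬝ᵥ (y - m)) (fun y => d ⬝ᵥ (y - m)) x = l ^ 2 := by
    simp only [gradDot, pderiv_dotProduct_sub, ← hd]
    rfl
  have hthis := (hlin.div_const (a * l))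
  unfold halfBallBarrier
  rw [lap_sub (contDiff_const.mul ((hthis.pow 2).sub hthis))
    (contDiff_const.mul (contDiff_sqDist m)), lap_const_mul (contDiff_sqDist m), lap_sqDist,
    lap_comp hG hG' hlin, lap_dotProduct_sub, hgrad]
  field_simp
  ring

lemma dotProduct_sub_div_le_one (ha : 0 < a) (hl : 0 < l) (hd : d ⬝ᵥ d = l ^ 2)
    (hx : sqDist m x = a ^ 2) : d ⬝ᵥ (x - m) / (a * l) ≤ 1 := by
  refine (div_le_one (mul_pos ha hl)).2 (le_of_sq_le_sq ?_ (mul_pos ha hl).le)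
  calc (d ⬝ᵥ (x - m)) ^ 2 ≤ (∑ i, d i ^ 2) * ∑ i, (x i - m i) ^ 2 :=
        Finset.sum_mul_sq_le_sq_mul_sq _ _ _
    _ = (a * l) ^ 2 := by
        rw [mul_pow, ← hx, ← hd, mul_comm]
        simp only [dotProduct, sqDist, sq]

lemma halfBallBarrier_le_neg_one (ha : 0 < a) (hl : 0 < l) (hd : d ⬝ᵥ d = l ^ 2)
    (hx : sqDist m x = a ^ 2) (h0 : 0 ≤ d ⬝ᵥ (x - m)) : halfBallBarrier m d a l x ≤ -1 := by
  have h1 := dotProduct_sub_div_le_one ha hl hd hx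
  have h2 : 0 ≤ d ⬝ᵥ (x - m) / (a * l) := by positivity
  rw [halfBallBarrier, hx, one_div_mul_cancel (by positivity)]
  have : 0 ≤ (n + 1 : ℝ) * (d ⬝ᵥ (x - m) / (a * l) * (1 - d ⬝ᵥ (x - m) / (a * l))) :=
    mul_nonneg (by positivity) (mul_nonneg h2 (sub_nonneg.2 h1))
  linarith

lemma halfBallBarrier_nonpos_of_dotProduct_eq_zero (h0 : d ⬝ᵥ (x - m) = 0) :
    halfBallBarrier m d a l x ≤ 0 := by
  have := mul_nonneg (one_div_nonneg.2 (sq_nonneg a)) (sqDist_nonneg m x)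
  rw [halfBallBarrier, h0, zero_div]
  linarith

lemma dotProduct_add_half_smul_sub (hd : d ⬝ᵥ d = l ^ 2) :
    d ⬝ᵥ (m + (1 / 2 : ℝ) • d - m) = l ^ 2 / 2 := by
  rw [add_sub_cancel_left, dotProduct_smul, hd, smul_eq_mul]
  ring

lemma sqDist_add_half_smul (hd : d ⬝ᵥ d = l ^ 2) :
    sqDist m (m + (1 / 2 : ℝ) • d) = l ^ 2 / 4 := by
  rw [sqDist_eq_dotProduct, add_sub_cancel_left, smul_dotProduct, dotProduct_smul, hd, smul_eq_mul,
    smul_eq_mul]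
  ring

lemma neg_le_halfBallBarrier_add_half (ha : 0 < a) (hl : 0 < l) (hd : d ⬝ᵥ d = l ^ 2) :
    -((n + 1) / 2 * (l / a)) ≤ halfBallBarrier m d a l (m + (1 / 2 : ℝ) • d) := by
  rw [halfBallBarrier, sqDist_add_half_smul hd, dotProduct_add_half_smul_sub hd]
  have : (n + 1) * ((l ^ 2 / 2 / (a * l)) ^ 2 - l ^ 2 / 2 / (a * l)) -
      1 / a ^ 2 * (l ^ 2 / 4) = n / 4 * (l / a) ^ 2 - (n + 1) / 2 * (l / a) := by
    field_simp
    ring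
  rw [this]
  have : 0 ≤ n / 4 * (l / a) ^ 2 := by positivity
  linarith

/-- Interior Lipschitz estimate for harmonic functions with values in `[0, 1]`. The difference of
`h` and its reflection in the perpendicular bisector of the two points vanishes on the bisector. -/
theorem IsWeaklyHarmonicOn.sub_le_of_mem_Icc (hU : IsOpen U) (hh : IsWeaklyHarmonicOn U h)
    (hl : 0 < l) (hd : d ⬝ᵥ d = l ^ 2) (hla : l ≤ 2 * a)
    (hball : ∀ x, sqDist m x ≤ a ^ 2 → x ∈ U ∧ h x ∈ Icc 0 1) :
    h (m - (1 / 2 : ℝ) • d) - (n + 1) / 2 * (l / a) ≤ h (m + (1 / 2 : ℝ) • d) := by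
  have ha : 0 < a := by linarith
  have hd0 : d ⬝ᵥ d ≠ 0 := by rw [hd]; positivity
  have hrefl (x : Fin n → ℝ) := sqDist_hyperplaneReflection hd0 m x
  set u : (Fin n → ℝ) → ℝ := fun x => h x - h (hyperplaneReflection m d x)
  set V : Set (Fin n → ℝ) := {x | sqDist m x < a ^ 2}
  have hV : IsOpen V := isOpen_lt (contDiff_sqDist m (k := 0)).continuous continuous_const
  have hVU : V ⊆ U := fun x hx => (hball x hx.le).1
  have hu : IsWeaklyHarmonicOn V u := (hh.mono hVU).sub hV <|
    hh.comp_hyperplaneReflection hU hd0 fun x hx => hVU (by simpa only [V, mem_ofPred, hrefl])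
  have hlin := (contDiff_dotProduct_sub d m (k := 0)).continuous
  have hQ : IsCompact ({x | sqDist m x ≤ a ^ 2} ∩ {x | 0 ≤ d ⬝ᵥ (x - m)}) :=
    (isCompact_sqDist_le m (a ^ 2)).inter_right (isClosed_le continuous_const hlin)
  have hcont : ContinuousOn u {x | sqDist m x ≤ a ^ 2} :=
    (hh.contDiffOn.continuousOn.mono fun x hx => (hball x hx).1).sub <|
      hh.contDiffOn.continuousOn.comp (continuous_hyperplaneReflection m d).continuousOn
        fun x hx => (hball _ ((hrefl x).trans_le hx)).1
  have hcomp := (hu.mono inter_subset_left).le_of_lap_pos_of_isMinOn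
    (s := halfBallBarrier m d a l) (V := V ∩ {x | 0 < d ⬝ᵥ (x - m)}) hQ
    (hV.inter (isOpen_lt continuous_const hlin))
    (fun x hx => ⟨(show sqDist m x < a ^ 2 from hx.1).le, (show 0 < d ⬝ᵥ (x - m) from hx.2).le⟩)
    (hcont.mono inter_subset_left) contDiff_halfBallBarrier
    (fun x _ => Or.inr (by rw [lap_halfBallBarrier ha hl hd]; positivity))
    fun z ⟨⟨hza, hz0⟩, hz⟩ _ => by
      rcases eq_or_lt_of_le (show 0 ≤ d ⬝ᵥ (z - m) from hz0) with h0 | h0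
      · have : hyperplaneReflection m d z = z := by simp [hyperplaneReflection, ← h0]
        simpa [u, this] using halfBallBarrier_nonpos_of_dotProduct_eq_zero h0.symm
      · have h1 : sqDist m z = a ^ 2 := le_antisymm hza (not_lt.1 fun h1 => hz ⟨h1, h0⟩)
        have := halfBallBarrier_le_neg_one ha hl hd h1 hz0
        have := (hball z hza).2.1
        have := (hball _ ((hrefl z).trans_le hza)).2.2
        linarith
  have hsq := sqDist_add_half_smul (m := m) hd
  have hdot := dotProduct_add_half_smul_sub (m := m) hd
  have := hcomp _ ⟨by rw [mem_ofPred, hsq]; nlinarith, by rw [mem_ofPred, hdot]; positivity⟩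
  have := neg_le_halfBallBarrier_add_half (m := m) ha hl hd
  simp only [u, hyperplaneReflection_add_half hd0 m] at *
  linarith

/-- The two points are compared on the ball of radius `1/2` about their midpoint, which is contained
in the unit ball about `p`. -/
theorem IsWeaklyHarmonicOn.sub_le_of_sqDist_le {p y : Fin n → ℝ} (hU : IsOpen U)
    (hh : IsWeaklyHarmonicOn U h) (hl : 0 ≤ l) (hl1 : l < 1) (hy : sqDist p y ≤ l ^ 2)
    (hball : ∀ x, sqDist p x < 1 → x ∈ U ∧ h x ∈ Icc 0 1) : h p - (n + 1) * l ≤ h y := by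
  rcases eq_or_ne p y with rfl | hpy
  · have : 0 ≤ (n + 1 : ℝ) * l := by positivity
    linarith
  have hpos : 0 < sqDist p y := by
    obtain ⟨i, hi⟩ := Function.ne_iff.1 hpy
    exact Finset.sum_pos' (fun j _ => sq_nonneg _)
      ⟨i, Finset.mem_univ i, sq_pos_of_ne_zero (sub_ne_zero.2 hi.symm)⟩
  have hle : √(sqDist p y) ≤ l := Real.sqrt_le_iff.2 ⟨hl, hy⟩
  set m : Fin n → ℝ := p + (1 / 2 : ℝ) • (y - p)
  have hmem (x) (hx : sqDist m x ≤ (1 / 2) ^ 2) : sqDist p x < 1 := by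
    have : sqDist p x ≤ 2 * sqDist m x + 1 / 2 * sqDist p y := by
      simp only [sqDist, Finset.mul_sum, ← Finset.sum_add_distrib]
      refine Finset.sum_le_sum fun i _ => ?_
      have : m i = p i + 1 / 2 * (y i - p i) := rfl
      rw [this]
      nlinarith [sq_nonneg (x i - y i)]
    nlinarith
  have := hh.sub_le_of_mem_Icc (m := m) (a := 1 / 2) hU (Real.sqrt_pos.2 hpos)
    ((sqDist_eq_dotProduct p y).symm.trans (Real.sq_sqrt hpos.le).symm) (by linarith)
    fun x hx => hball x (hmem x hx)
  have hp : m - (1 / 2 : ℝ) • (y - p) = p := add_sub_cancel_right _ _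
  have hy' : m + (1 / 2 : ℝ) • (y - p) = y := by module
  rw [hp, hy'] at this
  have : (n + 1 : ℝ) * √(sqDist p y) ≤ (n + 1) * l := by gcongr
  linarith

end InteriorEstimate

section Cylinder

variable {K a b t : ℝ} {h s : (Fin 3 → ℝ) → ℝ} {x : Fin 3 → ℝ}

/-- The closed semi-infinite cylinder, which is the closure of `cylFrom K`. -/
def closedCyl (K : ℝ) : Set (Fin 3 → ℝ) := {x | x 0 ^ 2 + x 1 ^ 2 ≤ 1 ∧ K ≤ x 2}

/-- The closed slab `a ≤ x₃ ≤ b` of the cylinder. -/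
def closedSlab (a b : ℝ) : Set (Fin 3 → ℝ) := {x | x 0 ^ 2 + x 1 ^ 2 ≤ 1 ∧ a ≤ x 2 ∧ x 2 ≤ b}

/-- The open slab `a < x₃ < b` of the cylinder. -/
def openSlab (a b : ℝ) : Set (Fin 3 → ℝ) := {x | x 0 ^ 2 + x 1 ^ 2 < 1 ∧ a < x 2 ∧ x 2 < b}

lemma cylFrom_subset_closedCyl : cylFrom K ⊆ closedCyl K := fun _ hx => ⟨hx.1.le, hx.2.le⟩

lemma closedSlab_subset_closedCyl (h : K ≤ a) : closedSlab a b ⊆ closedCyl K :=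
  fun _ hx => ⟨hx.1, h.trans hx.2.1⟩

lemma openSlab_subset_cylFrom (h : K ≤ a) : openSlab a b ⊆ cylFrom K :=
  fun _ hx => ⟨hx.1, h.trans_lt hx.2.1⟩

lemma openSlab_subset_closedSlab : openSlab a b ⊆ closedSlab a b :=
  fun _ hx => ⟨hx.1.le, hx.2.1.le, hx.2.2.le⟩

lemma isOpen_cylFrom (K : ℝ) : IsOpen (cylFrom K) := by
  simp only [cylFrom, ofPred_and]
  refine (isOpen_lt ?_ ?_).inter (isOpen_lt ?_ ?_) <;> fun_prop

lemma isOpen_openSlab (a b : ℝ) : IsOpen (openSlab a b) := by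
  simp only [openSlab, ofPred_and]
  refine (isOpen_lt ?_ ?_).inter ((isOpen_lt ?_ ?_).inter (isOpen_lt ?_ ?_)) <;> fun_prop

lemma isClosed_closedCyl (K : ℝ) : IsClosed (closedCyl K) := by
  simp only [closedCyl, ofPred_and]
  refine (isClosed_le ?_ ?_).inter (isClosed_le ?_ ?_) <;> fun_prop

lemma isCompact_closedSlab (a b : ℝ) : IsCompact (closedSlab a b) := by
  refine (isCompact_Icc (a := ![-1, -1, a]) (b := ![1, 1, b])).of_isClosed_subset ?_ ?_
  · simp only [closedSlab, ofPred_and]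
    refine (isClosed_le ?_ ?_).inter ((isClosed_le ?_ ?_).inter (isClosed_le ?_ ?_)) <;> fun_prop
  · rintro x ⟨hx, ha, hb⟩
    have h0 : |x 0| ≤ 1 := abs_le_of_sq_le_sq (by nlinarith [sq_nonneg (x 1)]) zero_le_one
    have h1 : |x 1| ≤ 1 := abs_le_of_sq_le_sq (by nlinarith [sq_nonneg (x 0)]) zero_le_one
    rw [abs_le] at h0 h1
    constructor <;> intro i <;> fin_cases i
    exacts [h0.1, h1.1, ha, h0.2, h1.2, hb]

lemma sqDist_axis (T : ℝ) (x : Fin 3 → ℝ) :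
    sqDist ![0, 0, T] x = x 0 ^ 2 + x 1 ^ 2 + (x 2 - T) ^ 2 := by
  simp [sqDist, Fin.sum_univ_three]

/-- The radial scaling `(t x₁, t x₂, x₃)` of the cross sections of the cylinder. -/
def radialScale (t : ℝ) (x : Fin 3 → ℝ) : Fin 3 → ℝ := ![t * x 0, t * x 1, x 2]

lemma radialScale_one (x : Fin 3 → ℝ) : radialScale 1 x = x := by
  funext i
  fin_cases i <;> simp [radialScale]

lemma hasDerivAt_radialScale (t : ℝ) (x : Fin 3 → ℝ) :
    HasDerivAt (fun t => radialScale t x) ![x 0, x 1, 0] t := by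
  rw [hasDerivAt_pi]
  intro i
  fin_cases i
  exacts [hasDerivAt_mul_const _, hasDerivAt_mul_const _, hasDerivAt_const _ _]

lemma radialScale_sq_add_sq (t : ℝ) (x : Fin 3 → ℝ) :
    radialScale t x 0 ^ 2 + radialScale t x 1 ^ 2 = t ^ 2 * (x 0 ^ 2 + x 1 ^ 2) := by
  simp only [radialScale, Matrix.cons_val_zero, Matrix.cons_val_one]
  ring

lemma radialScale_mem_closedSlab (hx : x ∈ closedSlab a b) (ht : t ∈ Icc 0 1) :
    radialScale t x ∈ closedSlab a b := by
  refine ⟨?_, hx.2⟩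
  rw [radialScale_sq_add_sq]
  exact mul_le_one₀ (pow_le_one₀ ht.1 ht.2) (by positivity) hx.1

lemma hasDerivAt_comp_radialScale (hs : DifferentiableAt ℝ s x) :
    HasDerivAt (fun t => s (radialScale t x)) (x 0 * pderiv 0 s x + x 1 * pderiv 1 s x) 1 := by
  have h1 : HasFDerivAt s (fderiv ℝ s x) (radialScale 1 x) := by
    rw [radialScale_one]
    exact hs.hasFDerivAt
  have h2 := h1.comp_hasDerivAt (1 : ℝ) (hasDerivAt_radialScale 1 x)
  rw [fderiv_apply_eq_sum_pderiv, Fin.sum_univ_three] at h2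
  simp only [Matrix.cons_val, zero_mul, add_zero] at h2
  exact h2

/-- Weakly harmonic functions in the cylinder which are continuous up to the boundary and satisfy
the Neumann condition on the lateral boundary. They need not be `C¹` there, so the condition is
stated for the one-sided radial derivative. -/
structure IsNeumannHarmonic (K : ℝ) (h : (Fin 3 → ℝ) → ℝ) : Prop where
  continuousOn : ContinuousOn h (closedCyl K)
  isWeaklyHarmonicOn : IsWeaklyHarmonicOn (cylFrom K) h
  hasDerivWithinAt : ∀ x, x 0 ^ 2 + x 1 ^ 2 = 1 → K < x 2 →
    HasDerivWithinAt (fun t => h (radialScale t x)) 0 (Icc 0 1) 1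

lemma deriv_nonpos_of_isMinOn_Icc {g : ℝ → ℝ} {g' : ℝ}
    (hg : HasDerivWithinAt g g' (Icc 0 1) 1) (hmin : IsMinOn g (Icc 0 1) 1) : g' ≤ 0 := by
  have hseg : segment ℝ (1 : ℝ) 0 ⊆ Icc 0 1 := by
    rw [segment_symm, segment_eq_Icc zero_le_one]
  have := hmin.localize.hasFDerivWithinAt_nonneg hg.hasFDerivWithinAt
    (sub_mem_posTangentConeAt_of_segment_subset hseg)
  simpa using this

namespace IsNeumannHarmonic

lemma const_mul_sub (hh : IsNeumannHarmonic K h) (c d : ℝ) :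
    IsNeumannHarmonic K fun x => c * h x - d where
  continuousOn := (continuousOn_const.mul hh.continuousOn).sub continuousOn_const
  isWeaklyHarmonicOn := (hh.isWeaklyHarmonicOn.const_mul (isOpen_cylFrom K) c).sub
    (isOpen_cylFrom K) (isWeaklyHarmonicOn_const d)
  hasDerivWithinAt x hx hK := by
    simpa using ((hh.hasDerivWithinAt x hx hK).const_mul c).sub_const d

theorem le_of_lap_pos (hh : IsNeumannHarmonic K h) (hK : K ≤ a) (hs : ContDiff ℝ 2 s)
    (hint : ∀ x ∈ openSlab a b, s x ≤ h x ∨ 0 < lap s x)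
    (hlat : ∀ x, x 0 ^ 2 + x 1 ^ 2 = 1 → x 0 * pderiv 0 s x + x 1 * pderiv 1 s x < 0)
    (hbot : ∀ x ∈ closedSlab a b, x 2 = a → s x ≤ h x)
    (htop : ∀ x ∈ closedSlab a b, x 2 = b → s x ≤ h x) :
    ∀ x ∈ closedSlab a b, s x ≤ h x := by
  refine (hh.isWeaklyHarmonicOn.mono (openSlab_subset_cylFrom hK)).le_of_lap_pos_of_isMinOn
    (isCompact_closedSlab a b) (isOpen_openSlab a b) openSlab_subset_closedSlab
    (hh.continuousOn.mono (closedSlab_subset_closedCyl hK)) hs hint fun x ⟨hx, hxV⟩ hmin => ?_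
  by_contra hlt
  have ha : a < x 2 := hx.2.1.lt_of_ne fun h => hlt (hbot x hx h.symm)
  have hb : x 2 < b := hx.2.2.lt_of_ne fun h => hlt (htop x hx h)
  have h1 : x 0 ^ 2 + x 1 ^ 2 = 1 := hx.1.antisymm (not_lt.1 fun h => hxV ⟨h, ha, hb⟩)
  have hderiv := (hh.hasDerivWithinAt x h1 (hK.trans_lt ha)).sub
    (hasDerivAt_comp_radialScale (hs.differentiable two_ne_zero x)).hasDerivWithinAt
  have hmin' : IsMinOn (fun t => h (radialScale t x) - s (radialScale t x)) (Icc 0 1) 1 :=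
    fun t ht => by
      simp only [mem_ofPred, radialScale_one]
      exact hmin (radialScale_mem_closedSlab hx ht)
  linarith [deriv_nonpos_of_isMinOn_Icc hderiv hmin', hlat x h1]

end IsNeumannHarmonic
end Cylinder

section Oscillation

variable {K a b T L c ω B : ℝ} {h : (Fin 3 → ℝ) → ℝ} {x y : Fin 3 → ℝ}

/-- The radial profile of the comparison function `Γ(|x - (0, 0, T)|²)` of
`IsNeumannHarmonic.growthConst_le`; it vanishes at `|x - (0, 0, T)| = 2`. -/
noncomputable def growthProfile (t : ℝ) : ℝ := (exp (-512 * t) - exp (-2048)) / 4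

/-- The fraction of the oscillation that is lost over two units of length. -/
noncomputable def growthConst : ℝ := growthProfile 2

lemma growthProfile_antitone : Antitone growthProfile := fun s t hst => by
  unfold growthProfile
  gcongr ?_ / 4
  gcongr exp ?_ - _
  linarith

lemma growthProfile_le_quarter {t : ℝ} (ht : 0 ≤ t) : growthProfile t ≤ 1 / 4 := by
  have := exp_le_one_iff.2 (by linarith : -512 * t ≤ 0)
  unfold growthProfile
  linarith [exp_pos (-2048)]

lemma growthProfile_four : growthProfile 4 = 0 := by
  norm_num [growthProfile]

lemma growthConst_pos : 0 < growthConst := by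
  have := exp_lt_exp.2 (by norm_num : (-2048 : ℝ) < -512 * 2)
  exact div_pos (sub_pos.2 this) four_pos

lemma growthConst_le_quarter : growthConst ≤ 1 / 4 := growthProfile_le_quarter zero_le_two

lemma hasDerivAt_growthProfile (t : ℝ) :
    HasDerivAt growthProfile (-128 * exp (-512 * t)) t := by
  have hexp := ((hasDerivAt_id t).const_mul (-512)).exp
  refine ((hexp.sub_const (exp (-2048))).div_const 4).congr_deriv ?_
  simp only [id]
  ring

lemma lap_growthProfile_sqDist_pos {p : Fin 3 → ℝ} (hx : 1 / 256 < sqDist p x) :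
    0 < lap (fun y => growthProfile (sqDist p y)) x := by
  have h2 (t : ℝ) : HasDerivAt (fun t => -128 * exp (-512 * t)) (65536 * exp (-512 * t)) t := by
    refine ((((hasDerivAt_id t).const_mul (-512)).exp).const_mul (-128)).congr_deriv ?_
    simp only [id]
    ring
  rw [lap_comp hasDerivAt_growthProfile h2 (contDiff_sqDist p), gradDot_sqDist_self, lap_sqDist]
  have : 0 < exp (-512 * sqDist p x) * (262144 * sqDist p x - 768) :=
    mul_pos (exp_pos _) (by linarith)
  push_cast
  linarith

lemma sqDist_axis_lt_one (hx : sqDist ![0, 0, T] x < 1) : x ∈ openSlab (T - 2) (T + 2) := by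
  rw [sqDist_axis] at hx
  have hT : |x 2 - T| < 1 := abs_lt_of_sq_lt_sq (by nlinarith) zero_le_one
  rw [abs_lt] at hT
  exact ⟨by nlinarith, by linarith, by linarith⟩

namespace IsNeumannHarmonic

lemma growthConst_le (hh : IsNeumannHarmonic K h) (hK : K ≤ T - 2)
    (hb : ∀ x ∈ closedSlab (T - 2) (T + 2), h x ∈ Icc 0 1) (hT : 1 / 2 ≤ h ![0, 0, T]) :
    ∀ x ∈ closedSlab (T - 1) (T + 1), growthConst ≤ h x := by
  have hball (x : Fin 3 → ℝ) (hx : sqDist ![0, 0, T] x ≤ (1 / 16) ^ 2) : 1 / 4 ≤ h x := by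
    have := hh.isWeaklyHarmonicOn.sub_le_of_sqDist_le (isOpen_cylFrom K) (by norm_num)
      (by norm_num) hx fun y hy => ⟨openSlab_subset_cylFrom hK (sqDist_axis_lt_one hy),
        hb y (openSlab_subset_closedSlab (sqDist_axis_lt_one hy))⟩
    norm_num at this
    linarith
  have hends (x : Fin 3 → ℝ) (hx : x ∈ closedSlab (T - 2) (T + 2)) (hT2 : (x 2 - T) ^ 2 = 4) :
      growthProfile (sqDist ![0, 0, T] x) ≤ h x := by
    rw [sqDist_axis, hT2]
    exact (growthProfile_antitone (le_add_of_nonneg_left (by positivity))).trans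
      (growthProfile_four.le.trans (hb x hx).1)
  have hcmp := hh.le_of_lap_pos hK (s := fun x => growthProfile (sqDist ![0, 0, T] x))
    (by unfold growthProfile; have := contDiff_sqDist ![0, 0, T] (k := 2); fun_prop)
    (fun x _ => ?_) (fun x hx => ?_) (fun x hx hx2 => hends x hx (by rw [hx2]; ring))
    (fun x hx hx2 => hends x hx (by rw [hx2]; ring))
  · intro x hx
    refine le_trans ?_ (hcmp x ⟨hx.1, by linarith [hx.2.1], by linarith [hx.2.2]⟩)
    refine growthProfile_antitone ?_
    rw [sqDist_axis]
    nlinarith [hx.1, hx.2.1, hx.2.2]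
  · rcases le_or_gt (sqDist ![0, 0, T] x) ((1 / 16) ^ 2) with hnear | hfar
    · exact Or.inl ((growthProfile_le_quarter (sqDist_nonneg _ x)).trans (hball x hnear))
    · exact Or.inr (lap_growthProfile_sqDist_pos (by linarith))
  · have hd := (contDiff_sqDist ![0, 0, T]).differentiable one_ne_zero x
    simp only [pderiv_comp (hasDerivAt_growthProfile _) hd, pderiv_sqDist, Matrix.cons_val]
    have : -256 * exp (-512 * sqDist ![0, 0, T] x) * (x 0 ^ 2 + x 1 ^ 2) < 0 := by
      rw [hx]
      linarith [exp_pos (-512 * sqDist ![0, 0, T] x)]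
    linarith

lemma sub_const_mul_sqDist_le (hh : IsNeumannHarmonic K h) (hK : K ≤ a) {G G' G'' : ℝ → ℝ}
    (hGc : ContDiff ℝ 2 G) (hG : ∀ t, HasDerivAt G (G' t) t) (hG' : ∀ t, HasDerivAt G' (G'' t) t)
    {κ : ℝ} (hκ : 0 < κ) (hG'' : ∀ t, 6 * κ < G'' t)
    (hbot : ∀ x ∈ closedSlab a b, x 2 = a → G (x 2) - κ * sqDist ![0, 0, T] x ≤ h x)
    (htop : ∀ x ∈ closedSlab a b, x 2 = b → G (x 2) - κ * sqDist ![0, 0, T] x ≤ h x) :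
    ∀ x ∈ closedSlab a b, G (x 2) - κ * sqDist ![0, 0, T] x ≤ h x := by
  have hq := contDiff_sqDist ![0, 0, T] (k := 2)
  have hG2 : ContDiff ℝ 2 fun x : Fin 3 → ℝ => G (x 2) := by fun_prop
  refine hh.le_of_lap_pos hK (hG2.sub (contDiff_const.mul hq)) (fun x _ => Or.inr ?_)
    (fun x hx => ?_) hbot htop
  · rw [lap_sub hG2 (contDiff_const.mul hq), lap_comp_apply hG hG', lap_const_mul hq, lap_sqDist]
    push_cast
    linarith [hG'' (x 2)]
  · have hp (i : Fin 3) (hi : i ≠ 2) : pderiv i (fun x => G (x 2) - κ * sqDist ![0, 0, T] x) x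
        = -(κ * (2 * (x i - ![0, 0, T] i))) := by
      have hd := hq.differentiable two_ne_zero x
      rw [pderiv_sub (hG2.differentiable two_ne_zero x) (hd.const_mul κ),
        pderiv_comp_apply (hG _), if_neg hi, pderiv_const_mul hd, pderiv_sqDist, zero_sub]
    rw [hp 0 (by decide), hp 1 (by decide)]
    simp only [Matrix.cons_val]
    linear_combination -(2 * κ) * hx + 2 * hκ

/- Besides the linear function dropping from `c` to `0`, the barrier contains the quadratic
`κ (3 (x₃ - T)² - x₁² - x₂²)`, whose Laplacian and outer normal derivative have strict signs. -/
lemma sub_le_of_le_bottom (hh : IsNeumannHarmonic K h) (hK : K ≤ T) (hL : 0 < L) {κ : ℝ}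
    (hκ : 0 < κ) (hnonneg : ∀ x ∈ closedCyl T, 0 ≤ h x)
    (hbot : ∀ x ∈ closedCyl T, x 2 = T → c ≤ h x) (hx : x ∈ closedSlab T (T + L)) :
    c - c / L * (x 2 - T) - κ * (x 0 ^ 2 + x 1 ^ 2 + 3 * L ^ 2) ≤ h x := by
  set G : ℝ → ℝ := fun t => c - c / L * (t - T) + κ * (4 * (t - T) ^ 2 - 3 * L ^ 2) with hG
  have hGc : ContDiff ℝ 2 G := by fun_prop
  have hG1 (t : ℝ) : HasDerivAt G (-(c / L) + 8 * κ * (t - T)) t := by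
    have hid := (hasDerivAt_id t).sub_const T
    refine (((hid.const_mul (c / L)).const_sub c).add
      ((((hid.pow 2).const_mul 4).sub_const (3 * L ^ 2)).const_mul κ)).congr_deriv ?_
    simp only [id]
    ring
  have hG2 (t : ℝ) : HasDerivAt (fun t => -(c / L) + 8 * κ * (t - T)) (8 * κ) t := by
    simpa using (((hasDerivAt_id t).sub_const T).const_mul (8 * κ)).const_add (-(c / L))
  have hr (y : Fin 3 → ℝ) : 0 ≤ κ * (y 0 ^ 2 + y 1 ^ 2) := by positivity
  have hle := hh.sub_const_mul_sqDist_le hK (T := T) hGc hG1 hG2 hκ (fun _ => by linarith)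
    (fun y hy hy2 => ?_) (fun y hy hy2 => ?_) x hx
  · rw [sqDist_axis] at hle
    have : 0 ≤ κ * (x 2 - T) ^ 2 := by positivity
    linarith
  · have := hbot y (closedSlab_subset_closedCyl le_rfl hy) hy2
    have hκL : 0 ≤ κ * L ^ 2 := by positivity
    simp only [hG, sqDist_axis, hy2]
    linarith [hr y]
  · have := hnonneg y (closedSlab_subset_closedCyl le_rfl hy)
    simp only [hG, sqDist_axis, hy2, add_sub_cancel_left, div_mul_cancel₀ c hL.ne']
    linarith [hr y]

/- Phragmén–Lindelöf: let `κ → 0` and then `L → ∞` in the slab estimate. -/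
lemma le_of_le_bottom (hh : IsNeumannHarmonic K h) (hK : K ≤ T)
    (hnonneg : ∀ x ∈ closedCyl T, 0 ≤ h x) (hbot : ∀ x ∈ closedCyl T, x 2 = T → c ≤ h x) :
    ∀ x ∈ closedCyl T, c ≤ h x := by
  intro x hx
  have hslab : ∀ᶠ L in atTop, c - c / L * (x 2 - T) ≤ h x := by
    filter_upwards [eventually_gt_atTop 0, eventually_ge_atTop (x 2 - T)] with L hL hxL
    have hlim : Tendsto (fun κ => c - c / L * (x 2 - T) - κ * (x 0 ^ 2 + x 1 ^ 2 + 3 * L ^ 2))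
        (𝓝[>] 0) (𝓝 (c - c / L * (x 2 - T))) := by
      refine tendsto_nhdsWithin_of_tendsto_nhds (Continuous.tendsto' ?_ _ _ (by simp))
      fun_prop
    exact le_of_tendsto hlim (eventually_mem_nhdsWithin.mono fun κ hκ =>
      hh.sub_le_of_le_bottom hK hL hκ hnonneg hbot ⟨hx.1, hx.2, by linarith⟩)
  have hlim : Tendsto (fun L => c - c / L * (x 2 - T)) atTop (𝓝 c) := by
    simpa using ((tendsto_const_nhds.div_atTop tendsto_id).mul_const (x 2 - T)).const_sub c
  exact le_of_tendsto hlim hslab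

lemma growthConst_le_of_two_le (hh : IsNeumannHarmonic K h) (hK : K ≤ a)
    (hb : ∀ x ∈ closedCyl a, h x ∈ Icc 0 1) (hT : 1 / 2 ≤ h ![0, 0, a + 2]) :
    ∀ x ∈ closedCyl (a + 2), growthConst ≤ h x := by
  refine hh.le_of_le_bottom (by linarith)
    (fun x hx => (hb x ⟨hx.1, by linarith [hx.2]⟩).1) fun x hx hx2 => ?_
  exact hh.growthConst_le (T := a + 2) (by linarith)
    (fun y hy => hb y ⟨hy.1, by linarith [hy.2.1]⟩) hT x ⟨hx.1, by linarith, by linarith⟩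

lemma exists_forall_mem_Icc_add_two (hh : IsNeumannHarmonic K h) (hK : K ≤ a) (hω : 0 < ω) {l : ℝ}
    (hb : ∀ x ∈ closedCyl a, h x ∈ Icc l (l + ω)) :
    ∃ l', ∀ x ∈ closedCyl (a + 2), h x ∈ Icc l' (l' + (1 - growthConst) * ω) := by
  have hlo (x : Fin 3 → ℝ) : ω⁻¹ * h x - ω⁻¹ * l = (h x - l) / ω := by ring
  have hup (x : Fin 3 → ℝ) : -ω⁻¹ * h x - -ω⁻¹ * (l + ω) = (l + ω - h x) / ω := by ring
  have hmem : ∀ x ∈ closedCyl (a + 2), h x ∈ Icc l (l + ω) :=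
    fun x hx => hb x ⟨hx.1, by linarith [hx.2]⟩
  rcases le_total (1 / 2) ((h ![0, 0, a + 2] - l) / ω) with hmid | hmid
  · refine ⟨l + growthConst * ω, fun x hx => ?_⟩
    have := (hh.const_mul_sub ω⁻¹ (ω⁻¹ * l)).growthConst_le_of_two_le hK (fun y hy => by
      rw [hlo, mem_Icc, div_le_one hω]
      exact ⟨div_nonneg (by linarith [(hb y hy).1]) hω.le, by linarith [(hb y hy).2]⟩)
      (by rwa [hlo]) x hx
    rw [hlo, le_div_iff₀ hω] at this
    constructor <;> linarith [(hmem x hx).2]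
  · refine ⟨l, fun x hx => ?_⟩
    have := (hh.const_mul_sub (-ω⁻¹) (-ω⁻¹ * (l + ω))).growthConst_le_of_two_le hK (fun y hy => by
      rw [hup, mem_Icc, div_le_one hω]
      exact ⟨div_nonneg (by linarith [(hb y hy).2]) hω.le, by linarith [(hb y hy).1]⟩)
      (by
        rw [div_le_iff₀ hω] at hmid
        rw [hup, le_div_iff₀ hω]
        linarith) x hx
    rw [hup, le_div_iff₀ hω] at this
    constructor <;> linarith [(hmem x hx).1]

lemma exists_forall_mem_Icc_add_two_mul (hh : IsNeumannHarmonic K h) (hB : 0 < B)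
    (hb : ∀ x ∈ closedCyl K, |h x| ≤ B) (n : ℕ) :
    ∃ l, ∀ x ∈ closedCyl (K + 2 * n), h x ∈ Icc l (l + (1 - growthConst) ^ n * (2 * B)) := by
  have hθ : 0 < 1 - growthConst := by linarith [growthConst_le_quarter]
  induction n with
  | zero =>
    refine ⟨-B, fun x hx => ?_⟩
    have := abs_le.1 (hb x (by simpa using hx))
    constructor <;> linarith
  | succ n ih =>
    obtain ⟨l, hl⟩ := ih
    obtain ⟨l', hl'⟩ := hh.exists_forall_mem_Icc_add_two (by simp) (by positivity) hl
    refine ⟨l', fun x hx => ?_⟩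
    rw [pow_succ', mul_assoc]
    exact hl' x ⟨hx.1, by have := hx.2; push_cast at this; linarith⟩

end IsNeumannHarmonic

/-- The exponential rate at which the oscillation of bounded Neumann harmonic functions decays. -/
noncomputable def decayRate : ℝ := -log (1 - growthConst) / 2

/-- The constant factor in the decay of the oscillation of bounded Neumann harmonic functions. -/
noncomputable def decayConst : ℝ := 2 * (1 - growthConst)⁻¹

lemma decayRate_pos : 0 < decayRate := by
  have := log_neg (by linarith [growthConst_le_quarter]) (by linarith [growthConst_pos] :
    1 - growthConst < 1)
  unfold decayRate
  linarith

lemma decayConst_pos : 0 < decayConst := by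
  have : 0 < 1 - growthConst := by linarith [growthConst_le_quarter]
  unfold decayConst
  positivity

lemma decayRate_le_one : decayRate ≤ 1 := by
  have hθ : 0 < 1 - growthConst := by linarith [growthConst_le_quarter]
  have hlog := one_sub_inv_le_log_of_pos hθ
  have hinv : (1 - growthConst)⁻¹ ≤ 2 :=
    inv_le_of_inv_le₀ two_pos (by linarith [growthConst_le_quarter])
  unfold decayRate
  linarith

lemma two_mul_growth_pow_le (n : ℕ) {r : ℝ} (hr : r ≤ 2 * (n + 1)) :
    2 * (1 - growthConst) ^ n ≤ decayConst * exp (-decayRate * r) := by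
  have hθ : 0 < 1 - growthConst := by linarith [growthConst_le_quarter]
  have hpow : (1 - growthConst) ^ (n + 1) ≤ exp (-decayRate * r) := by
    rw [← exp_log (pow_pos hθ (n + 1)), log_pow, exp_le_exp,
      show log (1 - growthConst) = -2 * decayRate by unfold decayRate; ring]
    push_cast
    nlinarith [decayRate_pos]
  calc 2 * (1 - growthConst) ^ n = decayConst * (1 - growthConst) ^ (n + 1) := by
        rw [decayConst, pow_succ']
        field_simp
    _ ≤ decayConst * exp (-decayRate * r) := by gcongr; exact decayConst_pos.le

theorem IsNeumannHarmonic.abs_sub_le (hh : IsNeumannHarmonic K h) (hB : 0 < B)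
    (hb : ∀ x ∈ closedCyl K, |h x| ≤ B) (hK : K ≤ a) (hx : x ∈ closedCyl a) (hy : y ∈ closedCyl a) :
    |h x - h y| ≤ decayConst * B * exp (-decayRate * (a - K)) := by
  set n := ⌊(a - K) / 2⌋₊
  have hn := Nat.floor_le (by linarith : 0 ≤ (a - K) / 2)
  have hn1 := Nat.lt_floor_add_one ((a - K) / 2)
  obtain ⟨l, hl⟩ := hh.exists_forall_mem_Icc_add_two_mul hB hb n
  have hx' := hl x ⟨hx.1, by linarith [hx.2]⟩
  have hy' := hl y ⟨hy.1, by linarith [hy.2]⟩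
  calc |h x - h y| ≤ 2 * (1 - growthConst) ^ n * B := by
        rw [abs_le]
        constructor <;> linarith [hx'.1, hx'.2, hy'.1, hy'.2]
    _ ≤ decayConst * exp (-decayRate * (a - K)) * B :=
        mul_le_mul_of_nonneg_right (two_mul_growth_pow_le n (by linarith)) hB.le
    _ = decayConst * B * exp (-decayRate * (a - K)) := by ring

end Oscillation

section SlipSolution

variable {K ρ m : ℝ} {φ ψ : (Fin 3 → ℝ) → ℝ} {b q x : Fin 3 → ℝ}

lemma closure_cylFrom (K : ℝ) : closure (cylFrom K) = closedCyl K := by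
  refine (closure_minimal cylFrom_subset_closedCyl (isClosed_closedCyl K)).antisymm fun x hx => ?_
  have hseg : openSegment ℝ x ![0, 0, x 2 + 1] ⊆ cylFrom K := by
    rintro _ ⟨s, t, hs, ht, hst, rfl⟩
    have hs1 : s ^ 2 < 1 := by nlinarith
    constructor
    · simp only [Pi.add_apply, Pi.smul_apply, smul_eq_mul, Matrix.cons_val_zero,
        Matrix.cons_val_one, mul_zero, add_zero]
      nlinarith [hx.1]
    · calc K ≤ x 2 := hx.2
        _ < x 2 + t := lt_add_of_pos_right _ ht
        _ = s * x 2 + t * (x 2 + 1) := by linear_combination -x 2 * hst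
  exact closure_mono hseg (segment_subset_closure_openSegment (left_mem_segment ℝ x _))

lemma convexOn_sq_add_sq : ConvexOn ℝ univ fun x : Fin 3 → ℝ => x 0 ^ 2 + x 1 ^ 2 := by
  have hsq (i : Fin 3) : ConvexOn ℝ univ fun x : Fin 3 → ℝ => x i ^ 2 :=
    (even_two.convexOn_pow (𝕜 := ℝ)).comp_linearMap
      (LinearMap.proj i : (Fin 3 → ℝ) →ₗ[ℝ] ℝ)
  exact (hsq 0).add (hsq 1)

lemma convex_closedCyl (K : ℝ) : Convex ℝ (closedCyl K) := by
  have hhalf := convex_halfSpace_ge (LinearMap.proj (2 : Fin 3) : (Fin 3 → ℝ) →ₗ[ℝ] ℝ).isLinear K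
  simpa [closedCyl, ofPred_and] using (convexOn_sq_add_sq.convex_le 1).inter hhalf

lemma convex_cylFrom (K : ℝ) : Convex ℝ (cylFrom K) := by
  have hhalf := convex_halfSpace_gt (LinearMap.proj (2 : Fin 3) : (Fin 3 → ℝ) →ₗ[ℝ] ℝ).isLinear K
  simpa [cylFrom, ofPred_and] using (convexOn_sq_add_sq.convex_lt 1).inter hhalf

lemma convex_closedSlab (a b : ℝ) : Convex ℝ (closedSlab a b) := by
  have hhalf := convex_halfSpace_le (LinearMap.proj (2 : Fin 3) : (Fin 3 → ℝ) →ₗ[ℝ] ℝ).isLinear b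
  convert (convex_closedCyl a).inter hhalf using 1
  ext x
  exact and_assoc.symm

lemma uniqueDiffOn_closedCyl (K : ℝ) : UniqueDiffOn ℝ (closedCyl K) := by
  refine uniqueDiffOn_convex (convex_closedCyl K) ⟨![0, 0, K + 1],
    interior_maximal cylFrom_subset_closedCyl (isOpen_cylFrom K) ⟨?_, ?_⟩⟩ <;> simp

lemma fderivWithin_closedCyl (hx : x ∈ cylFrom K) :
    fderivWithin ℝ φ (closedCyl K) x = fderiv ℝ φ x :=
  fderivWithin_of_mem_nhds
    (mem_of_superset ((isOpen_cylFrom K).mem_nhds hx) cylFrom_subset_closedCyl)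

lemma sqDist_add_sq_le_sqDist_radialScale (hb : b 0 ^ 2 + b 1 ^ 2 = 1) (hx : x 0 ^ 2 + x 1 ^ 2 ≤ 1)
    (hρ : 0 ≤ ρ) : sqDist b x + ρ ^ 2 ≤ sqDist (radialScale (1 + ρ) b) x := by
  have hcs : x 0 * b 0 + x 1 * b 1 ≤ 1 := by
    nlinarith [sq_nonneg (x 0 - b 0), sq_nonneg (x 1 - b 1)]
  have hexp : sqDist (radialScale (1 + ρ) b) x =
      sqDist b x + ρ ^ 2 + 2 * ρ * (1 - (x 0 * b 0 + x 1 * b 1)) := by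
    simp only [sqDist, Fin.sum_univ_three, radialScale, Matrix.cons_val]
    linear_combination (2 * ρ + ρ ^ 2) * hb
  rw [hexp]
  exact le_add_of_nonneg_right (mul_nonneg (by positivity) (sub_nonneg.2 hcs))

lemma gradDot_truncation_sqDist (φ : (Fin 3 → ℝ) → ℝ) (m : ℝ) (q x : Fin 3 → ℝ) :
    gradDot φ (truncation univ m (sqDist q)) x =
      2 * (m - sqDist q x)⁻¹ ^ 2 * expNegInvGlue (m - sqDist q x) * fderiv ℝ φ x (q - x) := by
  rw [gradDot_truncation isOpen_univ (mem_univ x)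
    ((contDiff_sqDist q (k := 1)).differentiable one_ne_zero x), gradDot,
    fderiv_apply_eq_sum_pderiv, Finset.mul_sum, Finset.mul_sum]
  exact Finset.sum_congr rfl fun i _ => by rw [pderiv_sqDist, Pi.sub_apply]; ring

/-- Weak solutions of `Δφ = 0` in the cylinder with the slip condition on its lateral boundary:
the test functions vanish near the bottom, but not necessarily near the lateral boundary. -/
structure IsSlipSolution (K : ℝ) (φ : (Fin 3 → ℝ) → ℝ) : Prop where
  contDiffOn : ContDiffOn ℝ 1 φ (closedCyl K)
  integral_eq_zero : ∀ ψ : (Fin 3 → ℝ) → ℝ, ContDiff ℝ 1 ψ → HasCompactSupport ψ →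
    tsupport ψ ⊆ {x | K < x 2} → ∫ x in cylFrom K, gradDot φ ψ x = 0

namespace IsSlipSolution

lemma neg (hφ : IsSlipSolution K φ) : IsSlipSolution K fun x => -φ x where
  contDiffOn := hφ.contDiffOn.neg
  integral_eq_zero ψ hψ hc hs := by
    have h (x : Fin 3 → ℝ) : gradDot (fun y => -φ y) ψ x = -gradDot φ ψ x := by
      simp only [gradDot, pderiv, fderiv_fun_neg, neg_apply, neg_mul, Finset.sum_neg_distrib]
    simp only [h, integral_neg, hφ.integral_eq_zero ψ hψ hc hs, neg_zero]

lemma isWeaklyHarmonicOn (hφ : IsSlipSolution K φ) : IsWeaklyHarmonicOn (cylFrom K) φ where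
  contDiffOn := hφ.contDiffOn.mono cylFrom_subset_closedCyl
  integral_eq_zero ψ hψ hc hs := by
    rw [← hφ.integral_eq_zero ψ hψ hc fun x hx => (hs hx).2]
    exact (setIntegral_eq_integral_of_forall_compl_eq_zero fun x hx =>
      gradDot_eq_zero_of_notMem_tsupport fun h => hx (hs h)).symm

lemma hasFDerivWithinAt (hφ : IsSlipSolution K φ) (hx : x ∈ closedCyl K) :
    HasFDerivWithinAt φ (fderivWithin ℝ φ (closedCyl K) x) (closedCyl K) x :=
  (hφ.contDiffOn.differentiableOn one_ne_zero x hx).hasFDerivWithinAt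

lemma continuousOn_fderivWithin (hφ : IsSlipSolution K φ) :
    ContinuousOn (fderivWithin ℝ φ (closedCyl K)) (closedCyl K) :=
  hφ.contDiffOn.continuousOn_fderivWithin (uniqueDiffOn_closedCyl K) le_rfl

lemma integrableOn_gradDot (hφ : IsSlipSolution K φ) (hψ : ContDiff ℝ 1 ψ)
    (hc : HasCompactSupport ψ) : IntegrableOn (gradDot φ ψ) (cylFrom K) := by
  have hcont : ContinuousOn (fun x => ∑ i, fderivWithin ℝ φ (closedCyl K) x (Pi.single i 1) *
      pderiv i ψ x) (closedCyl K) :=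
    continuousOn_finsetSum _ fun i _ => (hφ.continuousOn_fderivWithin.clm_apply
      continuousOn_const).mul (continuous_pderiv hψ i).continuousOn
  have hint := (hcont.mono inter_subset_left).integrableOn_compact (μ := volume)
    (hc.isCompact.inter_left (isClosed_closedCyl K))
  refine (hint.of_forall_sdiff_eq_zero (isOpen_cylFrom K).measurableSet fun x hx => ?_).congr_fun
    (fun x hx => ?_) (isOpen_cylFrom K).measurableSet
  · have hxψ : x ∉ tsupport ψ := fun h => hx.2 ⟨cylFrom_subset_closedCyl hx.1, h⟩
    exact Finset.sum_eq_zero fun i _ => by rw [pderiv_eq_zero_of_notMem_tsupport hxψ, mul_zero]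
  · simp only [gradDot, pderiv, fderivWithin_closedCyl hx]

lemma exists_fderiv_sub_nonpos (hφ : IsSlipSolution K φ)
    (hm : {x | sqDist q x ≤ m} ⊆ {x | K < x 2}) (hne : ∃ x ∈ cylFrom K, sqDist q x < m) :
    ∃ x ∈ cylFrom K, sqDist q x < m ∧ fderiv ℝ φ x (q - x) ≤ 0 := by
  by_contra! hpos
  have hq : ContDiff ℝ 1 (sqDist q) := contDiff_sqDist q
  have hmem : ∀ x ∈ univ \ {x | sqDist q x ≤ m}, m ≤ sqDist q x := fun x hx => (not_le.1 hx.2).le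
  have hball := isCompact_sqDist_le q m
  set ψ := truncation univ m (sqDist q)
  have hψ : ContDiff ℝ 1 ψ :=
    contDiff_truncation isOpen_univ hball.isClosed (subset_univ _) hmem hq.contDiffOn
  have hsupp : tsupport ψ ⊆ {x | sqDist q x ≤ m} :=
    tsupport_truncation_subset hball.isClosed hmem
  have hψc : HasCompactSupport ψ := hball.of_isClosed_subset (isClosed_tsupport ψ) hsupp
  have hgrad (x : Fin 3 → ℝ) := gradDot_truncation_sqDist φ m q x
  have hgrad_pos : ∀ x ∈ cylFrom K, sqDist q x < m → 0 < gradDot φ ψ x := fun x hx hlt => by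
    have h1 := sub_pos.2 hlt
    have h2 := expNegInvGlue.pos_of_pos h1
    have h3 := hpos x hx hlt
    rw [hgrad]
    positivity
  have hgrad_nonneg : ∀ x ∈ cylFrom K, 0 ≤ gradDot φ ψ x := fun x hx => by
    rcases lt_or_ge (sqDist q x) m with hlt | hge
    · exact (hgrad_pos x hx hlt).le
    · rw [hgrad, expNegInvGlue.zero_of_nonpos (sub_nonpos.2 hge), mul_zero, zero_mul]
  have hopen : IsOpen ({x | sqDist q x < m} ∩ cylFrom K) :=
    (isOpen_lt hq.continuous continuous_const).inter (isOpen_cylFrom K)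
  obtain ⟨x₀, hx₀, hlt₀⟩ := hne
  refine ((setIntegral_pos_iff_support_of_nonneg_ae ?_
    (hφ.integrableOn_gradDot hψ hψc)).2 ?_).ne' (hφ.integral_eq_zero ψ hψ hψc (hsupp.trans hm))
  · exact (ae_restrict_iff' (isOpen_cylFrom K).measurableSet).2 (Eventually.of_forall hgrad_nonneg)
  · exact (hopen.measure_pos volume ⟨x₀, hlt₀, hx₀⟩).trans_le
      (measure_mono fun x hx => ⟨(hgrad_pos x hx.2 hx.1).ne', hx.2⟩)

lemma mem_closure_fderivWithin_sub_nonpos (hφ : IsSlipSolution K φ) (hb : b 0 ^ 2 + b 1 ^ 2 = 1)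
    (hρ : 0 < ρ) (hbK : K < b 2 - 2 * ρ) :
    b ∈ closure {x ∈ closedCyl K |
      fderivWithin ℝ φ (closedCyl K) x (radialScale (1 + ρ) b - x) ≤ 0} := by
  rw [Metric.mem_closure_iff]
  intro ε hε
  set q := radialScale (1 + ρ) b
  have hqb : sqDist q b = ρ ^ 2 := by
    simp only [sqDist, Fin.sum_univ_three, q, radialScale, Matrix.cons_val]
    linear_combination ρ ^ 2 * hb
  set τ := min (ε ^ 2) (ρ ^ 2)
  have hτ : 0 < τ := lt_min (by positivity) (by positivity)
  have hball : {x | sqDist q x ≤ ρ ^ 2 + τ} ⊆ {x | K < x 2} := fun x hx => by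
    have hx2 : (x 2 - b 2) ^ 2 ≤ sqDist q x :=
      Finset.single_le_sum (f := fun i => (x i - q i) ^ 2) (fun _ _ => sq_nonneg _)
        (Finset.mem_univ 2)
    have hle : (x 2 - b 2) ^ 2 ≤ (2 * ρ) ^ 2 := by
      nlinarith [min_le_right (ε ^ 2) (ρ ^ 2), mem_ofPred.1 hx]
    exact hbK.trans_le (by linarith [(abs_le.1 (abs_le_of_sq_le_sq hle (by positivity))).1])
  have hbcl : b ∈ closure (cylFrom K) := by
    rw [closure_cylFrom]
    exact ⟨hb.le, by linarith⟩
  obtain ⟨y, hy, hyK⟩ := mem_closure_iff.1 hbcl {x | sqDist q x < ρ ^ 2 + τ}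
    (isOpen_lt (contDiff_sqDist q (k := 0)).continuous continuous_const)
    (by simp only [mem_ofPred]; linarith)
  obtain ⟨x, hxK, hxq, hx⟩ := hφ.exists_fderiv_sub_nonpos hball ⟨y, hyK, hy⟩
  refine ⟨x, ⟨cylFrom_subset_closedCyl hxK, ?_⟩, ?_⟩
  · rwa [fderivWithin_closedCyl hxK]
  · rw [dist_comm]
    refine (dist_le_sqrt_sqDist b x).trans_lt ((sqrt_lt' hε).2 ?_)
    linarith [sqDist_add_sq_le_sqDist_radialScale hb hxK.1.le hρ.le,
      min_le_left (ε ^ 2) (ρ ^ 2)]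

lemma fderivWithin_radial_nonpos (hφ : IsSlipSolution K φ) (hb : b 0 ^ 2 + b 1 ^ 2 = 1)
    (hbK : K < b 2) : fderivWithin ℝ φ (closedCyl K) b ![b 0, b 1, 0] ≤ 0 := by
  obtain ⟨ρ, hρ, hρK⟩ : ∃ ρ, 0 < ρ ∧ K < b 2 - 2 * ρ := ⟨(b 2 - K) / 4, by linarith, by linarith⟩
  have hcont : ContinuousOn
      (fun x => fderivWithin ℝ φ (closedCyl K) x (radialScale (1 + ρ) b - x)) (closedCyl K) :=
    hφ.continuousOn_fderivWithin.clm_apply (continuousOn_const.sub continuousOn_id)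
  have hle := ((hcont b ⟨hb.le, hbK.le⟩).mono (sep_subset _ _)).closure_le
    (hφ.mem_closure_fderivWithin_sub_nonpos hb hρ hρK) continuousWithinAt_const fun x hx => hx.2
  have hsub : radialScale (1 + ρ) b - b = ρ • ![b 0, b 1, 0] := by
    funext i
    fin_cases i <;> simp [radialScale] <;> ring
  rw [hsub, map_smul, smul_eq_mul] at hle
  exact nonpos_of_mul_nonpos_right hle hρ

lemma fderivWithin_radial_eq_zero (hφ : IsSlipSolution K φ) (hb : b 0 ^ 2 + b 1 ^ 2 = 1)
    (hbK : K < b 2) : fderivWithin ℝ φ (closedCyl K) b ![b 0, b 1, 0] = 0 := by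
  refine (hφ.fderivWithin_radial_nonpos hb hbK).antisymm ?_
  have h := hφ.neg.fderivWithin_radial_nonpos hb hbK
  rw [fderivWithin_fun_neg (uniqueDiffOn_closedCyl K b ⟨hb.le, hbK.le⟩)] at h
  exact neg_nonpos.1 h

theorem isNeumannHarmonic (hφ : IsSlipSolution K φ) : IsNeumannHarmonic K φ where
  continuousOn := hφ.contDiffOn.continuousOn
  isWeaklyHarmonicOn := hφ.isWeaklyHarmonicOn
  hasDerivWithinAt x hx hxK := by
    have h1 := hφ.hasFDerivWithinAt (x := x) ⟨hx.le, hxK.le⟩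
    rw [← radialScale_one x] at h1
    have h2 := h1.comp_hasDerivWithinAt (1 : ℝ) (hasDerivAt_radialScale 1 x).hasDerivWithinAt
      fun t ht => closedSlab_subset_closedCyl hxK.le
        (radialScale_mem_closedSlab ⟨hx.le, le_rfl, le_rfl⟩ ht)
    rwa [radialScale_one, hφ.fderivWithin_radial_eq_zero hx hxK] at h2

end IsSlipSolution
end SlipSolution

section SymmetryDecay

variable {K M a α τ t m₀ : ℝ} {h h' φ : (Fin 3 → ℝ) → ℝ} {x y : Fin 3 → ℝ}

/-- The flow of the screw motions about the axis of the cylinder, which rotate at angular speed `α`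
and translate at speed `τ`. -/
noncomputable def screw (α τ t : ℝ) (x : Fin 3 → ℝ) : Fin 3 → ℝ :=
  ![cos (α * t) * x 0 - sin (α * t) * x 1, sin (α * t) * x 0 + cos (α * t) * x 1, x 2 + τ * t]

/-- The Killing field which generates the flow `screw α τ`. -/
def screwField (α τ : ℝ) (x : Fin 3 → ℝ) : Fin 3 → ℝ := ![-(α * x 1), α * x 0, τ]

lemma screw_zero (α τ : ℝ) (x : Fin 3 → ℝ) : screw α τ 0 x = x := by
  funext i
  fin_cases i <;> simp [screw]

lemma hasDerivAt_screw (α τ t : ℝ) (x : Fin 3 → ℝ) :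
    HasDerivAt (fun t => screw α τ t x) (screwField α τ (screw α τ t x)) t := by
  have hα : HasDerivAt (fun t => α * t) α t := by simpa using (hasDerivAt_id t).const_mul α
  have hτ : HasDerivAt (fun t => τ * t) τ t := by simpa using (hasDerivAt_id t).const_mul τ
  rw [hasDerivAt_pi]
  intro i
  fin_cases i
  · refine ((hα.cos.mul_const (x 0)).sub (hα.sin.mul_const (x 1))).congr_deriv ?_
    simp only [screwField, screw, Matrix.cons_val_one, Matrix.cons_val_zero, Fin.zero_eta]
    ring
  · refine ((hα.sin.mul_const (x 0)).add (hα.cos.mul_const (x 1))).congr_deriv ?_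
    simp only [screwField, screw, Matrix.cons_val_one, Matrix.cons_val_zero, Fin.mk_one]
    ring
  · exact hτ.const_add (x 2)

lemma screw_sq_add_sq (α τ t : ℝ) (x : Fin 3 → ℝ) :
    screw α τ t x 0 ^ 2 + screw α τ t x 1 ^ 2 = x 0 ^ 2 + x 1 ^ 2 := by
  simp only [screw, Matrix.cons_val_zero, Matrix.cons_val_one]
  linear_combination (x 0 ^ 2 + x 1 ^ 2) * sin_sq_add_cos_sq (α * t)

lemma le_screw_two (hτ : 0 ≤ τ) (ht : 0 ≤ t) : x 2 ≤ screw α τ t x 2 :=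
  le_add_of_nonneg_right (mul_nonneg hτ ht)

lemma screw_mem_closedCyl (hτ : 0 ≤ τ) (ht : 0 ≤ t) (hx : x ∈ closedCyl K) :
    screw α τ t x ∈ closedCyl K :=
  ⟨(screw_sq_add_sq α τ t x).trans_le hx.1, hx.2.trans (le_screw_two hτ ht)⟩

lemma screw_mem_cylFrom (hτ : 0 ≤ τ) (ht : 0 ≤ t) (hx : x ∈ cylFrom K) :
    screw α τ t x ∈ cylFrom K :=
  ⟨(screw_sq_add_sq α τ t x).trans_lt hx.1, hx.2.trans_le (le_screw_two hτ ht)⟩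

lemma screw_radialScale (α τ t s : ℝ) (x : Fin 3 → ℝ) :
    screw α τ t (radialScale s x) = radialScale s (screw α τ t x) := by
  funext i
  fin_cases i <;> simp [screw, radialScale] <;> ring

lemma screw_eq_mulVec_add (α τ t : ℝ) (x : Fin 3 → ℝ) :
    screw α τ t x = !![cos (α * t), -sin (α * t), 0; sin (α * t), cos (α * t), 0; 0, 0, 1] *ᵥ x +
      ![0, 0, τ * t] := by
  funext i
  fin_cases i <;> simp [screw, dotProduct, Fin.sum_univ_three, sub_eq_add_neg]

lemma norm3_screwField_le (hατ : α ^ 2 + τ ^ 2 = 1) (hx : x 0 ^ 2 + x 1 ^ 2 ≤ 1) :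
    norm3 (screwField α τ x) ≤ 1 := by
  refine sqrt_le_one.2 ?_
  simp only [Fin.sum_univ_three, screwField, Matrix.cons_val]
  nlinarith [sq_nonneg α]

namespace IsNeumannHarmonic

lemma sub (hh : IsNeumannHarmonic K h) (hh' : IsNeumannHarmonic K h') :
    IsNeumannHarmonic K fun x => h x - h' x where
  continuousOn := hh.continuousOn.sub hh'.continuousOn
  isWeaklyHarmonicOn := hh.isWeaklyHarmonicOn.sub (isOpen_cylFrom K) hh'.isWeaklyHarmonicOn
  hasDerivWithinAt x hx hK := by
    simpa using (hh.hasDerivWithinAt x hx hK).fun_sub (hh'.hasDerivWithinAt x hx hK)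

lemma comp_screw (hh : IsNeumannHarmonic K h) (hτ : 0 ≤ τ) (ht : 0 ≤ t) :
    IsNeumannHarmonic K fun x => h (screw α τ t x) where
  continuousOn := by
    refine hh.continuousOn.comp (Continuous.continuousOn ?_)
      fun x hx => screw_mem_closedCyl hτ ht hx
    rw [funext (screw_eq_mulVec_add α τ t)]
    exact (contDiff_mulVec_add (k := 0) _ _).continuous
  isWeaklyHarmonicOn := by
    simp only [screw_eq_mulVec_add]
    refine hh.isWeaklyHarmonicOn.comp_conformal (isOpen_cylFrom K) one_ne_zero ?_ _ fun x hx => ?_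
    · ext i j
      fin_cases i <;> fin_cases j <;> simp [Matrix.mul_apply, Fin.sum_univ_three, ← sq] <;> ring
    · rw [← screw_eq_mulVec_add]
      exact screw_mem_cylFrom hτ ht hx
  hasDerivWithinAt x hx hK := by
    simp only [screw_radialScale]
    exact hh.hasDerivWithinAt _ ((screw_sq_add_sq α τ t x).trans hx)
      (hK.trans_le (le_screw_two hτ ht))

end IsNeumannHarmonic

lemma abs_sum_mul_le_norm3_mul_norm3 (u v : Fin 3 → ℝ) : |∑ i, u i * v i| ≤ norm3 u * norm3 v := by
  rw [norm3, norm3, ← sqrt_mul (by positivity)]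
  exact abs_le_sqrt (Finset.sum_mul_sq_le_sq_mul_sq _ u v)

namespace IsSlipSolution

lemma abs_fderivWithin_le (hφ : IsSlipSolution K φ) (hM : ∀ x ∈ cylFrom K, norm3 (grad3 φ x) ≤ M)
    (hx : x ∈ closedCyl K) (v : Fin 3 → ℝ) :
    |fderivWithin ℝ φ (closedCyl K) x v| ≤ M * norm3 v := by
  have hcont : ContinuousWithinAt (fun y => |fderivWithin ℝ φ (closedCyl K) y v|) (cylFrom K) x :=
    ((hφ.continuousOn_fderivWithin.clm_apply continuousOn_const).abs x hx).mono
      cylFrom_subset_closedCyl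
  refine hcont.closure_le (by rwa [closure_cylFrom]) continuousWithinAt_const fun y hy => ?_
  calc |fderivWithin ℝ φ (closedCyl K) y v| = |∑ i, grad3 φ y i * v i| := by
        simp only [fderivWithin_closedCyl hy, fderiv_apply_eq_sum_pderiv, mul_comm (v _)]
        rfl
    _ ≤ norm3 (grad3 φ y) * norm3 v := abs_sum_mul_le_norm3_mul_norm3 _ v
    _ ≤ M * norm3 v := mul_le_mul_of_nonneg_right (hM y hy) (sqrt_nonneg _)

lemma hasDerivWithinAt_comp_screw (hφ : IsSlipSolution K φ) (hτ : 0 ≤ τ) (hx : x ∈ closedCyl K)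
    (ht : 0 ≤ t) :
    HasDerivWithinAt (fun t => φ (screw α τ t x))
      (fderivWithin ℝ φ (closedCyl K) (screw α τ t x) (screwField α τ (screw α τ t x)))
      (Ici 0) t :=
  (hφ.hasFDerivWithinAt (screw_mem_closedCyl hτ ht hx)).comp_hasDerivWithinAt t
    (hasDerivAt_screw α τ t x).hasDerivWithinAt fun _ hs => screw_mem_closedCyl hτ hs hx

lemma tendsto_screw_quotient (hφ : IsSlipSolution K φ) (hτ : 0 ≤ τ) (hx : x ∈ closedCyl K) :
    Tendsto (fun t => t⁻¹ * (φ (screw α τ t x) - φ x)) (𝓝[>] 0)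
      (𝓝 (fderivWithin ℝ φ (closedCyl K) x (screwField α τ x))) := by
  have h := (hφ.hasDerivWithinAt_comp_screw (α := α) hτ hx le_rfl).mono Ioi_subset_Ici_self
  rw [hasDerivWithinAt_iff_tendsto_slope' self_notMem_Ioi, screw_zero] at h
  refine h.congr fun t => ?_
  rw [slope_def_field, screw_zero, sub_zero, div_eq_inv_mul]

lemma abs_comp_screw_sub_le (hφ : IsSlipSolution K φ) (hM : ∀ x ∈ cylFrom K, norm3 (grad3 φ x) ≤ M)
    (hM0 : 0 ≤ M) (hατ : α ^ 2 + τ ^ 2 = 1) (hτ : 0 ≤ τ) (hx : x ∈ closedCyl K) (ht : 0 ≤ t) :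
    |φ (screw α τ t x) - φ x| ≤ M * t := by
  have hbound : ∀ s ∈ Ico 0 t, ‖fderivWithin ℝ φ (closedCyl K) (screw α τ s x)
      (screwField α τ (screw α τ s x))‖ ≤ M := fun s hs => by
    have hmem := screw_mem_closedCyl (α := α) hτ hs.1 hx
    exact (hφ.abs_fderivWithin_le hM hmem _).trans
      (mul_le_of_le_one_right hM0 (norm3_screwField_le hατ hmem.1))
  have h := norm_image_sub_le_of_norm_deriv_le_segment'
    (fun s hs => (hφ.hasDerivWithinAt_comp_screw hτ hx hs.1).mono Icc_subset_Ici_self) hbound t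
    (right_mem_Icc.2 ht)
  rwa [screw_zero, sub_zero] at h

theorem abs_fderivWithin_screwField_sub_le (hφ : IsSlipSolution K φ)
    (hM : ∀ x ∈ cylFrom K, norm3 (grad3 φ x) ≤ M) (hM0 : 0 < M) (hατ : α ^ 2 + τ ^ 2 = 1)
    (hτ : 0 ≤ τ) (hK : K ≤ a) (hx : x ∈ closedCyl a) (hy : y ∈ closedCyl a) :
    |fderivWithin ℝ φ (closedCyl K) x (screwField α τ x) -
      fderivWithin ℝ φ (closedCyl K) y (screwField α τ y)| ≤
      decayConst * M * exp (-decayRate * (a - K)) := by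
  have hmem : ∀ {z}, z ∈ closedCyl a → z ∈ closedCyl K := fun hz => ⟨hz.1, hK.trans hz.2⟩
  refine le_of_tendsto ((hφ.tendsto_screw_quotient hτ (hmem hx)).sub
    (hφ.tendsto_screw_quotient hτ (hmem hy))).abs ?_
  filter_upwards [self_mem_nhdsWithin] with t ht
  have ht : 0 < t := ht
  have hquot : IsNeumannHarmonic K fun z => t⁻¹ * (φ (screw α τ t z) - φ z) := by
    simpa only [sub_zero] using
      ((hφ.isNeumannHarmonic.comp_screw hτ ht.le).sub hφ.isNeumannHarmonic).const_mul_sub t⁻¹ 0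
  refine hquot.abs_sub_le hM0 (fun z hz => ?_) hK hx hy
  rw [abs_mul, abs_of_pos (inv_pos.2 ht), inv_mul_le_iff₀ ht, mul_comm t]
  exact hφ.abs_comp_screw_sub_le hM hM0.le hατ hτ hz ht.le

end IsSlipSolution

lemma isOpen_diskSet : IsOpen diskSet := by
  unfold diskSet
  refine isOpen_lt ?_ ?_ <;> fun_prop

lemma volume_diskSet : volume diskSet = ENNReal.ofReal π := by
  have hball : WithLp.toLp 2 ⁻¹' Metric.ball (0 : EuclideanSpace ℝ (Fin 2)) 1 = diskSet := by
    ext x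
    simp [diskSet, EuclideanSpace.norm_eq, sqrt_lt' one_pos]
  rw [← hball, (PiLp.volume_preserving_toLp (Fin 2)).measure_preimage
    Metric.isOpen_ball.measurableSet.nullMeasurableSet, EuclideanSpace.volume_ball_fin_two]
  simp

lemma screwField_zero_one (x : Fin 3 → ℝ) : screwField 0 1 x = Pi.single 2 1 := by
  funext i
  fin_cases i <;> simp [screwField]

lemma abs_le_norm3 (v : Fin 3 → ℝ) (i : Fin 3) : |v i| ≤ norm3 v :=
  abs_le_sqrt (Finset.single_le_sum (f := fun i => v i ^ 2) (fun _ _ => sq_nonneg _)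
    (Finset.mem_univ i))

lemma integrableOn_grad3_snoc (hφ : ContDiffOn ℝ 1 φ (cylFrom K))
    (hM : ∀ x ∈ cylFrom K, norm3 (grad3 φ x) ≤ M) (ht : K < t) (i : Fin 3) :
    IntegrableOn (fun x' => grad3 φ (Fin.snoc x' t) i) diskSet := by
  have hcont : ContinuousOn (fun x' : Fin 2 → ℝ => grad3 φ (Fin.snoc x' t) i) diskSet := by
    have hsnoc : Continuous fun x' : Fin 2 → ℝ => (Fin.snoc x' t : Fin 3 → ℝ) :=
      Continuous.finSnoc (A := fun _ => ℝ) continuous_id continuous_const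
    exact (continuousOn_pderiv (isOpen_cylFrom K) hφ i).comp hsnoc.continuousOn
      fun x' hx' => ⟨hx', ht⟩
  refine IntegrableOn.of_bound (by rw [volume_diskSet]; exact ENNReal.ofReal_lt_top)
    (hcont.aestronglyMeasurable isOpen_diskSet.measurableSet) M ?_
  exact (ae_restrict_iff' isOpen_diskSet.measurableSet).2 <| Eventually.of_forall fun x' hx' =>
    (abs_le_norm3 _ i).trans (hM _ ⟨hx', ht⟩)

namespace IsSlipSolution

lemma flux_div_pi_mem_of_convex {S : Set ℝ} (hφ : IsSlipSolution K φ)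
    (hM : ∀ x ∈ cylFrom K, norm3 (grad3 φ x) ≤ M) (ha : K < a)
    (hflux : ∫ x' in diskSet, grad3 φ (Fin.snoc x' a) 2 = m₀) (hS : Convex ℝ S) (hSc : IsClosed S)
    (hmem : ∀ x' ∈ diskSet, grad3 φ (Fin.snoc x' a) 2 ∈ S) : m₀ / π ∈ S := by
  have hne : volume diskSet ≠ 0 := by simp [volume_diskSet, pi_pos]
  have hfin : volume diskSet ≠ ⊤ := by simp [volume_diskSet]
  have havg := hS.set_average_mem hSc hne hfin
    ((ae_restrict_iff' isOpen_diskSet.measurableSet).2 (Eventually.of_forall hmem))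
    (integrableOn_grad3_snoc (hφ.contDiffOn.mono cylFrom_subset_closedCyl) hM ha 2)
  rwa [setAverage_eq, hflux, measureReal_def, volume_diskSet, ENNReal.toReal_ofReal pi_pos.le,
    smul_eq_mul, inv_mul_eq_div] at havg

lemma abs_flux_div_pi_le (hφ : IsSlipSolution K φ)
    (hM : ∀ x ∈ cylFrom K, norm3 (grad3 φ x) ≤ M) (ha : K < a)
    (hflux : ∫ x' in diskSet, grad3 φ (Fin.snoc x' a) 2 = m₀) : |m₀ / π| ≤ M :=
  abs_le.2 <| hφ.flux_div_pi_mem_of_convex hM ha hflux (convex_Icc (-M) M) isClosed_Icc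
    fun _ hx' => abs_le.1 ((abs_le_norm3 _ 2).trans (hM _ ⟨hx', ha⟩))

theorem abs_fderivWithin_sub_flux_le (hφ : IsSlipSolution K φ)
    (hM : ∀ x ∈ cylFrom K, norm3 (grad3 φ x) ≤ M) (hM0 : 0 < M) (ha : K < a)
    (hflux : ∫ x' in diskSet, grad3 φ (Fin.snoc x' a) 2 = m₀) (hx : x ∈ closedCyl a) :
    |fderivWithin ℝ φ (closedCyl K) x (Pi.single 2 1) - m₀ / π| ≤
      decayConst * M * exp (-decayRate * (a - K)) := by
  rw [abs_sub_comm]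
  refine hφ.flux_div_pi_mem_of_convex hM ha hflux (convex_closedBall _ _)
    Metric.isClosed_closedBall fun x' hx' => ?_
  have hx'K : (Fin.snoc x' a : Fin 3 → ℝ) ∈ cylFrom K := ⟨hx', ha⟩
  have h := hφ.abs_fderivWithin_screwField_sub_le (α := 0) hM hM0 (by norm_num) zero_le_one ha.le
    (y := x) (x := Fin.snoc x' a) ⟨hx'K.1.le, le_rfl⟩ hx
  rwa [screwField_zero_one, screwField_zero_one, fderivWithin_closedCyl hx'K] at h

theorem abs_fderivWithin_angular_le (hφ : IsSlipSolution K φ)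
    (hM : ∀ x ∈ cylFrom K, norm3 (grad3 φ x) ≤ M) (hM0 : 0 < M) (hK : K ≤ a)
    (hx : x ∈ closedCyl a) :
    |fderivWithin ℝ φ (closedCyl K) x (screwField 1 0 x)| ≤
      decayConst * M * exp (-decayRate * (a - K)) := by
  have haxis : screwField 1 0 ![0, 0, a] = 0 := by
    funext i
    fin_cases i <;> simp [screwField]
  have h := hφ.abs_fderivWithin_screwField_sub_le (α := 1) (y := ![0, 0, a]) hM hM0 (by norm_num)
    le_rfl hK hx ⟨by simp, le_rfl⟩
  rwa [haxis, map_zero, sub_zero] at h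

end IsSlipSolution
end SymmetryDecay

section Dilation

/-- The difference quotient of `φ` along the dilations `x ↦ (1 - κ) x + κ p` with center `p`. -/
noncomputable def dilationQuotient {E : Type*} [AddCommGroup E] [Module ℝ E] (κ : ℝ) (p : E)
    (φ : E → ℝ) (x : E) : ℝ :=
  κ⁻¹ * (φ x - φ ((1 - κ) • x + κ • p))

lemma abs_dilationQuotient_sub_le {E : Type*} [NormedAddCommGroup E] [NormedSpace ℝ E]
    {φ : E → ℝ} {φ' : E → E →L[ℝ] ℝ} {Q : Set E} {p x : E} {κ ε : ℝ} (hQ : Convex ℝ Q)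
    (hφ : ∀ ξ ∈ Q, HasFDerivWithinAt φ (φ' ξ) Q ξ) (hp : p ∈ Q) (hx : x ∈ Q)
    (hκ : κ ∈ Ioo (0 : ℝ) 1)
    (hosc : ∀ ξ ∈ Q, dist ξ x ≤ κ * ‖x - p‖ → ‖φ' ξ - φ' x‖ ≤ ε) :
    |dilationQuotient κ p φ x - φ' x (x - p)| ≤ ε * ‖x - p‖ := by
  obtain ⟨hκ0, hκ1⟩ := hκ
  set y := (1 - κ) • x + κ • p
  have hxy : x - y = κ • (x - p) := by module
  have hy : y ∈ Q := hQ hx hp (sub_nonneg.2 hκ1.le) hκ0.le (by ring)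
  have hseg : segment ℝ y x ⊆ Q := hQ.segment_subset hy hx
  have hosc_seg : ∀ ξ ∈ segment ℝ y x, ‖φ' ξ - φ' x‖ ≤ ε := fun ξ hξ => hosc ξ (hseg hξ) <| by
    calc dist ξ x ≤ ‖y - x‖ := by
          rw [dist_eq_norm]
          exact norm_sub_le_of_mem_segment (segment_symm ℝ y x ▸ hξ)
      _ = κ * ‖x - p‖ := by rw [norm_sub_rev, hxy, norm_smul, norm_of_nonneg hκ0.le]
  have hmv := (convex_segment y x).norm_image_sub_le_of_norm_hasFDerivWithin_le'
    (fun ξ hξ => (hφ ξ (hseg hξ)).mono hseg) hosc_seg (left_mem_segment ℝ y x)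
    (right_mem_segment ℝ y x)
  rw [hxy, map_smul, norm_smul, norm_eq_abs, norm_eq_abs, abs_of_pos hκ0, smul_eq_mul] at hmv
  have hquot : dilationQuotient κ p φ x - φ' x (x - p) =
      κ⁻¹ * (φ x - φ y - κ * φ' x (x - p)) := by
    rw [dilationQuotient, mul_sub κ⁻¹ (φ x - φ y), inv_mul_cancel_left₀ hκ0.ne']
  rw [hquot, abs_mul, abs_of_pos (inv_pos.2 hκ0), inv_mul_le_iff₀ hκ0]
  exact hmv.trans_eq (mul_left_comm _ _ _)

lemma exists_dilationQuotient_sub_le {E : Type*} [NormedAddCommGroup E] [NormedSpace ℝ E]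
    {φ : E → ℝ} {φ' : E → E →L[ℝ] ℝ} {Q : Set E} {p : E} {η : ℝ} (hQ : IsCompact Q)
    (hconv : Convex ℝ Q) (hφ : ∀ x ∈ Q, HasFDerivWithinAt φ (φ' x) Q x) (hφ' : ContinuousOn φ' Q)
    (hp : p ∈ Q) (hη : 0 < η) :
    ∃ κ ∈ Ioo (0 : ℝ) 1, ∀ x ∈ Q, |dilationQuotient κ p φ x - φ' x (x - p)| ≤ η := by
  set R := Metric.diam Q + 1
  have hR : 0 < R := by positivity
  have hdist : ∀ x ∈ Q, ‖x - p‖ ≤ R := fun x hx => by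
    rw [← dist_eq_norm]
    exact (Metric.dist_le_diam_of_mem hQ.isBounded hx hp).trans (lt_add_one _).le
  obtain ⟨δ, hδ, huc⟩ := Metric.uniformContinuousOn_iff.1
    (hQ.uniformContinuousOn_of_continuous hφ') (η / R) (by positivity)
  obtain ⟨κ, hκ, hκlt⟩ := exists_between (lt_min one_pos (div_pos hδ hR))
  obtain ⟨hκ1, hκR⟩ := lt_min_iff.1 hκlt
  refine ⟨κ, ⟨hκ, hκ1⟩, fun x hx => ?_⟩
  have hosc : ∀ ξ ∈ Q, dist ξ x ≤ κ * ‖x - p‖ → ‖φ' ξ - φ' x‖ ≤ η / R := fun ξ hξ hξx => by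
    have hξδ : dist ξ x < δ := calc
      dist ξ x ≤ κ * ‖x - p‖ := hξx
      _ ≤ κ * R := by gcongr; exact hdist x hx
      _ < δ := (lt_div_iff₀ hR).1 hκR
    simpa only [dist_eq_norm] using (huc ξ hξ x hx hξδ).le
  calc |dilationQuotient κ p φ x - φ' x (x - p)| ≤ η / R * ‖x - p‖ :=
        abs_dilationQuotient_sub_le hconv hφ hp hx ⟨hκ, hκ1⟩ hosc
    _ ≤ η / R * R := by gcongr; exact hdist x hx
    _ = η := div_mul_cancel₀ η hR.ne'

lemma IsWeaklyHarmonicOn.dilationQuotient {n : ℕ} {U V : Set (Fin n → ℝ)} {u : (Fin n → ℝ) → ℝ}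
    {κ : ℝ} {p : Fin n → ℝ} (hU : IsOpen U) (hu : IsWeaklyHarmonicOn U u) (hUc : Convex ℝ U)
    (hp : p ∈ U) (hκ : κ ∈ Ioo (0 : ℝ) 1) (hV : IsOpen V) (hVU : V ⊆ U) :
    IsWeaklyHarmonicOn V (dilationQuotient κ p u) := by
  have hκ1 : 0 < 1 - κ := sub_pos.2 hκ.2
  have hA (x : Fin n → ℝ) : ((1 - κ) • (1 : Matrix (Fin n) (Fin n) ℝ)) *ᵥ x = (1 - κ) • x := by
    rw [Matrix.smul_mulVec, Matrix.one_mulVec]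
  have hdil := hu.comp_conformal (V := V) (A := (1 - κ) • 1) (c := (1 - κ) ^ 2) hU
    (pow_ne_zero 2 hκ1.ne') (by simp [smul_smul, sq]) (κ • p) fun x hx => by
      rw [hA]
      exact hUc (hVU hx) hp hκ1.le hκ.1.le (by ring)
  simp only [hA] at hdil
  exact ((hu.mono hVU).sub hV hdil).const_mul hV κ⁻¹

end Dilation

section HorizontalDecay

variable {K M L E N q z m₀ : ℝ} {u φ : (Fin 3 → ℝ) → ℝ} {b p x : Fin 3 → ℝ}

/-- A positive superharmonic function on the cylinder, which grows exponentially away from the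
height `z`. -/
noncomputable def coshBarrier (z : ℝ) (x : Fin 3 → ℝ) : ℝ :=
  (2 - x 0 ^ 2 - x 1 ^ 2) * cosh (x 2 - z)

lemma contDiff_coshBarrier (z : ℝ) : ContDiff ℝ 2 (coshBarrier z) := by
  unfold coshBarrier
  fun_prop

lemma lap_coshBarrier (z : ℝ) (x : Fin 3 → ℝ) :
    lap (coshBarrier z) x = -(2 + x 0 ^ 2 + x 1 ^ 2) * cosh (x 2 - z) := by
  have hsq (t : ℝ) : HasDerivAt (fun t => t ^ 2) (2 * t) t := by simpa using hasDerivAt_pow 2 t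
  have hlin (t : ℝ) : HasDerivAt (fun t => 2 * t) 2 t := by
    simpa using (hasDerivAt_id t).const_mul (2 : ℝ)
  have hcosh (t : ℝ) : HasDerivAt (fun t => cosh (t - z)) (sinh (t - z)) t := by
    simpa using ((hasDerivAt_id t).sub_const z).cosh
  have hsinh (t : ℝ) : HasDerivAt (fun t => sinh (t - z)) (cosh (t - z)) t := by
    simpa using ((hasDerivAt_id t).sub_const z).sinh
  have hf0 : ContDiff ℝ 2 fun y : Fin 3 → ℝ => 2 - y 0 ^ 2 := by fun_prop
  have hf1 : ContDiff ℝ 2 fun y : Fin 3 → ℝ => y 1 ^ 2 := by fun_prop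
  have hg : ContDiff ℝ 2 fun y : Fin 3 → ℝ => cosh (y 2 - z) := by fun_prop
  have hlap : lap (fun y : Fin 3 → ℝ => 2 - y 0 ^ 2 - y 1 ^ 2) x = -4 := by
    rw [lap_sub hf0 hf1, lap_comp_apply hsq hlin 1, lap_comp_apply (G := fun t => 2 - t ^ 2)
      (fun t => (hsq t).const_sub 2) (fun t => (hlin t).fun_neg) 0]
    norm_num
  have hcross : gradDot (fun y : Fin 3 → ℝ => 2 - y 0 ^ 2 - y 1 ^ 2)
      (fun y => cosh (y 2 - z)) x = 0 := by
    have hpf : pderiv 2 (fun y : Fin 3 → ℝ => 2 - y 0 ^ 2 - y 1 ^ 2) x = 0 := by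
      rw [pderiv_sub (hf0.differentiable two_ne_zero x) (hf1.differentiable two_ne_zero x),
        pderiv_comp_apply (G := fun t => 2 - t ^ 2) ((hsq _).const_sub 2),
        pderiv_comp_apply (hsq _)]
      simp
    simp [gradDot, pderiv_comp_apply (hcosh _), hpf]
  have hprod := lap_mul (hf0.sub hf1) hg x
  rw [hlap, hcross, lap_comp_apply hcosh hsinh] at hprod
  refine hprod.trans ?_
  ring

lemma cosh_le_coshBarrier (hx : x 0 ^ 2 + x 1 ^ 2 ≤ 1) : cosh (x 2 - z) ≤ coshBarrier z x :=
  le_mul_of_one_le_left (cosh_pos _).le (by linarith)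

lemma coshBarrier_le_two (hxz : x 2 = z) : coshBarrier z x ≤ 2 := by
  rw [coshBarrier, hxz, sub_self, cosh_zero, mul_one]
  linarith [sq_nonneg (x 0), sq_nonneg (x 1)]

lemma contDiff_linear_sub_coshBarrier (q z c E : ℝ) :
    ContDiff ℝ 2 fun y => q * (y 2 - z) - c * coshBarrier z y - E := by
  have := contDiff_coshBarrier z
  fun_prop

lemma lap_linear_sub_coshBarrier_pos {c : ℝ} (hc : 0 < c) (q z E : ℝ) (x : Fin 3 → ℝ) :
    0 < lap (fun y => q * (y 2 - z) - c * coshBarrier z y - E) x := by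
  have hlin : ContDiff ℝ 2 fun y : Fin 3 → ℝ => q * (y 2 - z) := by fun_prop
  have hbar : ContDiff ℝ 2 fun y => c * coshBarrier z y :=
    contDiff_const.mul (contDiff_coshBarrier z)
  have hlap_lin : lap (fun y : Fin 3 → ℝ => q * (y 2 - z)) x = 0 :=
    lap_comp_apply (G'' := fun _ => 0)
      (fun t => by simpa using ((hasDerivAt_id t).sub_const z).const_mul q)
      (fun t => hasDerivAt_const t q) 2 x
  rw [lap_sub (hlin.sub hbar) contDiff_const, lap_sub hlin hbar, lap_const, hlap_lin,
    lap_const_mul (contDiff_coshBarrier z), lap_coshBarrier, neg_mul, mul_neg, sub_zero,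
    zero_sub, neg_neg]
  have := cosh_pos (x 2 - z)
  positivity

lemma abs_sub_eq_of_notMem_openSlab (hx : x ∈ closedSlab (z - L) (z + L))
    (hxV : x ∉ openSlab (z - L) (z + L)) (hx1 : x 0 ^ 2 + x 1 ^ 2 < 1) : |x 2 - z| = L := by
  refine (abs_le.2 ⟨by linarith [hx.2.1], by linarith [hx.2.2]⟩).antisymm (not_lt.1 fun h => hxV ?_)
  obtain ⟨h1, h2⟩ := abs_lt.1 h
  exact ⟨hx1, by linarith, by linarith⟩

theorem IsWeaklyHarmonicOn.neg_sub_le_of_lateral_le (hL : 0 < L) (hN : 0 < N)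
    (hcont : ContinuousOn u (closedSlab (z - L) (z + L)))
    (hu : IsWeaklyHarmonicOn (openSlab (z - L) (z + L)) u)
    (hlat : ∀ b ∈ closedSlab (z - L) (z + L), b 0 ^ 2 + b 1 ^ 2 = 1 → q * (b 2 - z) - E ≤ u b)
    (hend : ∀ b ∈ closedSlab (z - L) (z + L), |b 2 - z| = L → q * (b 2 - z) - E - N ≤ u b)
    (hx : x 0 ^ 2 + x 1 ^ 2 ≤ 1) (hxz : x 2 = z) : -E - 2 * N / cosh L ≤ u x := by
  have hcosh := cosh_pos L
  have hle := hu.le_of_lap_pos_of_isMinOn (isCompact_closedSlab _ _) (isOpen_openSlab _ _)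
    openSlab_subset_closedSlab hcont (contDiff_linear_sub_coshBarrier q z (N / cosh L) E)
    (fun y _ => Or.inr (lap_linear_sub_coshBarrier_pos (by positivity) q z E y))
    (fun y ⟨hy, hyV⟩ _ => ?_) x ⟨hx, by linarith, by linarith⟩
  · calc -E - 2 * N / cosh L = q * (x 2 - z) - N / cosh L * 2 - E := by rw [hxz]; ring
      _ ≤ q * (x 2 - z) - N / cosh L * coshBarrier z x - E := by
          gcongr
          exact coshBarrier_le_two hxz
      _ ≤ u x := hle
  · have hbar : N / cosh L * cosh (y 2 - z) ≤ N / cosh L * coshBarrier z y := by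
      gcongr
      exact cosh_le_coshBarrier hy.1
    rcases hy.1.eq_or_lt with h1 | h1
    · have : 0 < N / cosh L * cosh (y 2 - z) := mul_pos (by positivity) (cosh_pos _)
      linarith [hlat y hy h1]
    · have habs := abs_sub_eq_of_notMem_openSlab hy hyV h1
      rw [← cosh_abs (y 2 - z), habs, div_mul_cancel₀ _ hcosh.ne'] at hbar
      linarith [hend y hy habs]

lemma norm3_sub_le (hL : 0 ≤ L) (hx : x 0 ^ 2 + x 1 ^ 2 ≤ 1)
    (hp : p 0 ^ 2 + p 1 ^ 2 ≤ 1) (hxp : |x 2 - p 2| ≤ L) : norm3 (x - p) ≤ 2 + L := by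
  refine sqrt_le_iff.2 ⟨by positivity, ?_⟩
  simp only [Fin.sum_univ_three, Pi.sub_apply]
  have hxp2 := sq_le_sq' (abs_le.1 hxp).1 (abs_le.1 hxp).2
  nlinarith [sq_nonneg (x 0 + p 0), sq_nonneg (x 1 + p 1)]

namespace IsSlipSolution

lemma neg_sub_le_fderivWithin_sub (hφ : IsSlipSolution K φ)
    (hM : ∀ x ∈ cylFrom K, norm3 (grad3 φ x) ≤ M) (hM0 : 0 < M) (hq : |q| ≤ M) (hE : 0 ≤ E)
    (hL : 0 < L) (hK : K < z - L) (hpz : p 2 = z) (hp : p 0 ^ 2 + p 1 ^ 2 < 1)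
    (hlat : ∀ b ∈ closedSlab (z - L) (z + L), b 0 ^ 2 + b 1 ^ 2 = 1 →
      q * (b 2 - z) - E ≤ fderivWithin ℝ φ (closedCyl K) b (b - p))
    (hx : x 0 ^ 2 + x 1 ^ 2 ≤ 1) (hxz : x 2 = z) :
    -E - 4 * M * (1 + L) / cosh L ≤ fderivWithin ℝ φ (closedCyl K) x (x - p) := by
  set Q := closedSlab (z - L) (z + L)
  have hQK : Q ⊆ closedCyl K := closedSlab_subset_closedCyl hK.le
  have hpK : p ∈ cylFrom K := ⟨hp, by linarith⟩
  have hpQ : p ∈ Q := ⟨hp.le, by linarith, by linarith⟩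
  refine le_of_forall_pos_sub_le fun η hη => ?_
  obtain ⟨κ, hκ, hclose⟩ := exists_dilationQuotient_sub_le (isCompact_closedSlab _ _)
    (convex_closedSlab _ _) (fun y hy => (hφ.hasFDerivWithinAt (hQK hy)).mono hQK)
    (hφ.continuousOn_fderivWithin.mono hQK) hpQ (half_pos hη)
  have hcont : ContinuousOn (dilationQuotient κ p φ) Q := by
    have hφc := hφ.contDiffOn.continuousOn.mono hQK
    refine continuousOn_const.mul (hφc.sub (hφc.comp (by fun_prop) fun y hy => ?_))
    exact convex_closedSlab _ _ hy hpQ (sub_nonneg.2 hκ.2.le) hκ.1.le (by ring)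
  have hend : ∀ b ∈ Q, |b 2 - z| = L →
      q * (b 2 - z) - (E + η / 2) - 2 * M * (1 + L) ≤ dilationQuotient κ p φ b := fun b hb hbz => by
    have hD : |fderivWithin ℝ φ (closedCyl K) b (b - p)| ≤ M * (2 + L) := by
      refine (hφ.abs_fderivWithin_le hM (hQK hb) _).trans ?_
      gcongr
      exact norm3_sub_le hL.le hb.1 hp.le (by rw [hpz, hbz])
    have hqL : |q * (b 2 - z)| ≤ M * L := by
      rw [abs_mul, hbz]
      gcongr
    linarith [(abs_le.1 hD).1, (abs_le.1 hqL).2, (abs_le.1 (hclose b hb)).1]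
  have hle := ((hφ.isWeaklyHarmonicOn.dilationQuotient (isOpen_cylFrom K) (convex_cylFrom K) hpK hκ
    (isOpen_openSlab _ _) (openSlab_subset_cylFrom hK.le)).neg_sub_le_of_lateral_le
    (E := E + η / 2) hL (by positivity) hcont
    (fun b hb hb1 => by linarith [hlat b hb hb1, (abs_le.1 (hclose b hb)).1]) hend hx hxz)
  rw [← mul_assoc, ← mul_assoc, show (2 : ℝ) * 2 = 4 by norm_num] at hle
  linarith [(abs_le.1 (hclose x ⟨hx, by linarith, by linarith⟩)).2]

lemma abs_fderivWithin_sub_le_of_lateral (hφ : IsSlipSolution K φ)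
    (hM : ∀ x ∈ cylFrom K, norm3 (grad3 φ x) ≤ M) (hM0 : 0 < M) (hq : |q| ≤ M) (hE : 0 ≤ E)
    (hL : 0 < L) (hK : K < z - L) (hpz : p 2 = z) (hp : p 0 ^ 2 + p 1 ^ 2 < 1)
    (hlat : ∀ b ∈ closedSlab (z - L) (z + L), b 0 ^ 2 + b 1 ^ 2 = 1 →
      |fderivWithin ℝ φ (closedCyl K) b (b - p) - q * (b 2 - z)| ≤ E)
    (hx : x 0 ^ 2 + x 1 ^ 2 ≤ 1) (hxz : x 2 = z) :
    |fderivWithin ℝ φ (closedCyl K) x (x - p)| ≤ E + 4 * M * (1 + L) / cosh L := by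
  have hneg (y : Fin 3 → ℝ) (hy : y ∈ closedCyl K) :
      fderivWithin ℝ (fun x => -φ x) (closedCyl K) y = -fderivWithin ℝ φ (closedCyl K) y :=
    fderivWithin_fun_neg (uniqueDiffOn_closedCyl K y hy)
  have hM' : ∀ y ∈ cylFrom K, norm3 (grad3 (fun x => -φ x) y) ≤ M := fun y hy => by
    simpa [norm3, grad3, fderiv_fun_neg] using hM y hy
  have hlow := hφ.neg_sub_le_fderivWithin_sub hM hM0 hq hE hL hK hpz hp (fun b hb hb1 => by
    linarith [(abs_le.1 (hlat b hb hb1)).1]) hx hxz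
  have hupp := hφ.neg.neg_sub_le_fderivWithin_sub (q := -q) hM' hM0 (by rwa [abs_neg]) hE hL
    hK hpz hp (fun b hb hb1 => by
      rw [hneg b (closedSlab_subset_closedCyl hK.le hb), neg_apply]
      linarith [(abs_le.1 (hlat b hb hb1)).2]) hx hxz
  rw [hneg x ⟨hx, by linarith⟩, neg_apply] at hupp
  exact abs_le.2 ⟨by linarith, by linarith⟩

lemma abs_fderivWithin_sub_sub_le (hφ : IsSlipSolution K φ)
    (hM : ∀ x ∈ cylFrom K, norm3 (grad3 φ x) ≤ M) (hM0 : 0 < M) (hL : 0 < L)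
    (hflux : ∫ x' in diskSet, grad3 φ (Fin.snoc x' (K + L)) 2 = m₀)
    (hp : p 0 ^ 2 + p 1 ^ 2 ≤ 1) (hb : b 0 ^ 2 + b 1 ^ 2 = 1) (hbK : K + L ≤ b 2)
    (hbp : |b 2 - p 2| ≤ L) :
    |fderivWithin ℝ φ (closedCyl K) b (b - p) - m₀ / π * (b 2 - p 2)| ≤
      (1 + L) * (decayConst * M * exp (-decayRate * L)) := by
  have hbKL : b ∈ closedCyl (K + L) := ⟨hb.le, hbK⟩
  have haxial := hφ.abs_fderivWithin_sub_flux_le hM hM0 (lt_add_of_pos_right K hL) hflux hbKL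
  have hangular := hφ.abs_fderivWithin_angular_le hM hM0 (le_add_of_nonneg_right hL.le) hbKL
  rw [add_sub_cancel_left] at haxial hangular
  set ε := decayConst * M * exp (-decayRate * L)
  set c := p 1 * b 0 - p 0 * b 1
  have hc : |c| ≤ 1 := abs_le_of_sq_le_sq
    (by nlinarith [sq_nonneg (p 0 * b 0 + p 1 * b 1)]) zero_le_one
  have hdecomp : b - p = (1 - (p 0 * b 0 + p 1 * b 1)) • ![b 0, b 1, 0] - c • screwField 1 0 b +
      (b 2 - p 2) • Pi.single 2 1 := by
    funext i
    fin_cases i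
    · linear_combination (norm := (simp [screwField, c]; ring)) p 0 * hb
    · linear_combination (norm := (simp [screwField, c]; ring)) p 1 * hb
    · simp [screwField]
  calc |fderivWithin ℝ φ (closedCyl K) b (b - p) - m₀ / π * (b 2 - p 2)|
      = |-c * fderivWithin ℝ φ (closedCyl K) b (screwField 1 0 b) +
          (b 2 - p 2) * (fderivWithin ℝ φ (closedCyl K) b (Pi.single 2 1) - m₀ / π)| := by
        rw [hdecomp, map_add, map_sub, map_smul, map_smul, map_smul,
          hφ.fderivWithin_radial_eq_zero hb (by linarith)]
        simp only [smul_eq_mul]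
        ring_nf
    _ ≤ 1 * ε + L * ε := by
        refine (abs_add_le _ _).trans ?_
        rw [abs_mul, abs_mul, abs_neg]
        gcongr
    _ = (1 + L) * ε := by ring

end IsSlipSolution

lemma inv_cosh_le (t : ℝ) : (cosh t)⁻¹ ≤ 2 * exp (-t) := by
  rw [inv_le_iff_one_le_mul₀ (cosh_pos t), cosh_eq]
  have : exp (-t) * exp t = 1 := by rw [← exp_add, neg_add_cancel, exp_zero]
  nlinarith [sq_nonneg (exp (-t))]

lemma one_add_mul_exp_neg_le {d t : ℝ} (hd : 0 < d) (ht : 0 ≤ t) :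
    (1 + t) * exp (-d * t) ≤ (1 + 2 / d) * exp (-(d / 2) * t) := by
  have hexp : 1 + t ≤ (1 + 2 / d) * exp (d / 2 * t) := calc
    1 + t ≤ 1 + t + (2 / d + d / 2 * t) := le_add_of_nonneg_right (by positivity)
    _ = (1 + 2 / d) * (d / 2 * t + 1) := by field_simp; ring
    _ ≤ (1 + 2 / d) * exp (d / 2 * t) := by gcongr; exact add_one_le_exp _
  calc (1 + t) * exp (-d * t) ≤ (1 + 2 / d) * exp (d / 2 * t) * exp (-d * t) := by gcongr
    _ = (1 + 2 / d) * exp (-(d / 2) * t) := by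
        rw [mul_assoc, ← exp_add]
        ring_nf

namespace IsSlipSolution

lemma abs_fderivWithin_sub_le (hφ : IsSlipSolution K φ)
    (hM : ∀ x ∈ cylFrom K, norm3 (grad3 φ x) ≤ M) (hM0 : 0 < M)
    (hflux : ∀ t, K < t → ∫ x' in diskSet, grad3 φ (Fin.snoc x' t) 2 = m₀)
    (hx : x ∈ cylFrom K) (hp : p 0 ^ 2 + p 1 ^ 2 < 1) (hpx : p 2 = x 2) :
    |fderivWithin ℝ φ (closedCyl K) x (x - p)| ≤
      (decayConst + 8) * (1 + 2 / decayRate) * M * exp (-(decayRate / 4) * (x 2 - K)) := by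
  set L := (x 2 - K) / 2
  have hxK : x 2 - K = 2 * L := by ring
  have hL : 0 < L := half_pos (sub_pos.2 hx.2)
  have hKL : K < K + L := lt_add_of_pos_right K hL
  have hexp : exp (-L) ≤ exp (-decayRate * L) :=
    exp_le_exp.2 (by nlinarith [decayRate_le_one])
  have hdc := decayConst_pos
  have hlat : ∀ b ∈ closedSlab (x 2 - L) (x 2 + L), b 0 ^ 2 + b 1 ^ 2 = 1 →
      |fderivWithin ℝ φ (closedCyl K) b (b - p) - m₀ / π * (b 2 - x 2)| ≤
        (1 + L) * (decayConst * M * exp (-decayRate * L)) := fun b hb hb1 => by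
    rw [← hpx]
    exact hφ.abs_fderivWithin_sub_sub_le hM hM0 hL (hflux _ hKL) hp.le hb1 (by linarith [hb.2.1])
      (abs_le.2 ⟨by linarith [hb.2.1], by linarith [hb.2.2]⟩)
  calc |fderivWithin ℝ φ (closedCyl K) x (x - p)|
      ≤ (1 + L) * (decayConst * M * exp (-decayRate * L)) + 4 * M * (1 + L) / cosh L :=
        hφ.abs_fderivWithin_sub_le_of_lateral hM hM0
          (hφ.abs_flux_div_pi_le hM hKL (hflux _ hKL)) (by positivity) hL (by linarith) hpx hp hlat
          hx.1.le rfl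
    _ ≤ (1 + L) * (decayConst * M * exp (-decayRate * L)) +
          4 * M * (1 + L) * (2 * exp (-decayRate * L)) := by
        rw [div_eq_mul_inv]
        gcongr
        exact (inv_cosh_le L).trans (by gcongr)
    _ = (decayConst + 8) * M * ((1 + L) * exp (-decayRate * L)) := by ring
    _ ≤ (decayConst + 8) * M * ((1 + 2 / decayRate) * exp (-(decayRate / 2) * L)) := by
        exact mul_le_mul_of_nonneg_left (one_add_mul_exp_neg_le decayRate_pos hL.le)
          (by positivity)
    _ = (decayConst + 8) * (1 + 2 / decayRate) * M * exp (-(decayRate / 4) * (x 2 - K)) := by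
        rw [hxK]
        ring_nf

theorem abs_grad3_le_of_ne_two {i : Fin 3} (hφ : IsSlipSolution K φ)
    (hM : ∀ x ∈ cylFrom K, norm3 (grad3 φ x) ≤ M) (hM0 : 0 < M)
    (hflux : ∀ t, K < t → ∫ x' in diskSet, grad3 φ (Fin.snoc x' t) 2 = m₀)
    (hx : x ∈ cylFrom K) (hi : i ≠ 2) :
    |grad3 φ x i| ≤ 4 * ((decayConst + 8) * (1 + 2 / decayRate)) * M *
      exp (-(decayRate / 4) * (x 2 - K)) := by
  set p : Fin 3 → ℝ := ![0, 0, x 2]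
  have hp := hφ.abs_fderivWithin_sub_le (p := p) hM hM0 hflux hx (by simp [p]) rfl
  have hp' := hφ.abs_fderivWithin_sub_le (p := p + Pi.single i (1 / 2)) hM hM0 hflux hx
    (by fin_cases i <;> norm_num [p] at hi ⊢) (by simp [p, hi.symm])
  have hsplit : Pi.single i (1 : ℝ) = (2 : ℝ) • ((x - p) - (x - (p + Pi.single i (1 / 2)))) := by
    rw [sub_sub_sub_cancel_left, add_sub_cancel_left, ← Pi.single_smul]
    norm_num
  rw [grad3, ← fderivWithin_closedCyl hx, hsplit, map_smul, map_sub, smul_eq_mul, abs_mul,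
    abs_two]
  linarith [abs_sub (fderivWithin ℝ φ (closedCyl K) x (x - p))
    (fderivWithin ℝ φ (closedCyl K) x (x - (p + Pi.single i (1 / 2))))]

end IsSlipSolution

lemma norm3_le_abs_add (v : Fin 3 → ℝ) : norm3 v ≤ |v 0| + |v 1| + |v 2| := by
  refine sqrt_le_iff.2 ⟨by positivity, ?_⟩
  rw [Fin.sum_univ_three, ← sq_abs (v 0), ← sq_abs (v 1), ← sq_abs (v 2)]
  nlinarith [abs_nonneg (v 0), abs_nonneg (v 1), abs_nonneg (v 2),
    mul_nonneg (abs_nonneg (v 0)) (abs_nonneg (v 1))]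

theorem IsSlipSolution.norm3_grad3_sub_le (hφ : IsSlipSolution K φ)
    (hM : ∀ x ∈ cylFrom K, norm3 (grad3 φ x) ≤ M) (hM0 : 0 < M)
    (hflux : ∀ t, K < t → ∫ x' in diskSet, grad3 φ (Fin.snoc x' t) 2 = m₀)
    (hx : x ∈ cylFrom K) :
    norm3 (grad3 φ x - ![0, 0, m₀ / π]) ≤
      (8 * ((decayConst + 8) * (1 + 2 / decayRate)) + decayConst) * M *
        exp (-(decayRate / 4) * (x 2 - K)) := by
  have hvert : |grad3 φ x 2 - m₀ / π| ≤
      decayConst * M * exp (-(decayRate / 4) * (x 2 - K)) := by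
    have h := hφ.abs_fderivWithin_sub_flux_le hM hM0 hx.2 (hflux _ hx.2) ⟨hx.1.le, le_rfl⟩
    rw [fderivWithin_closedCyl hx] at h
    refine h.trans ?_
    have := decayConst_pos
    gcongr
    · exact sub_nonneg.2 hx.2.le
    · exact div_le_self decayRate_pos.le (by norm_num)
  have h0 := hφ.abs_grad3_le_of_ne_two (i := 0) hM hM0 hflux hx (by decide)
  have h1 := hφ.abs_grad3_le_of_ne_two (i := 1) hM hM0 hflux hx (by decide)
  refine (norm3_le_abs_add _).trans ?_
  simp only [Pi.sub_apply, Matrix.cons_val, sub_zero]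
  linarith

end HorizontalDecay

theorem incompressible_flat_exponential_rate_general :
    ∃ C > (0 : ℝ), ∃ d > (0 : ℝ), ∀ (m₀ M K : ℝ) (φ : (Fin 3 → ℝ) → ℝ), 0 < M →
      ContDiffOn ℝ 1 φ (closure (cylFrom K)) →
      (∀ ψ : (Fin 3 → ℝ) → ℝ, ContDiff ℝ 1 ψ → HasCompactSupport ψ →
        tsupport ψ ⊆ {x : Fin 3 → ℝ | K < x 2} →
        ∫ x in cylFrom K, ∑ i, grad3 φ x i * grad3 ψ x i = 0) →
      (∀ t : ℝ, K < t → ∫ x' in diskSet, grad3 φ (Fin.snoc x' t) 2 = m₀) →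
      (∀ x ∈ cylFrom K, norm3 (grad3 φ x) ≤ M) →
      ∀ x ∈ cylFrom K,
        norm3 (grad3 φ x - ![0, 0, m₀ / π]) ≤ C * M * exp (-d * (x 2 - K)) := by
  have hconst := decayConst_pos
  have hrate := decayRate_pos
  refine ⟨8 * ((decayConst + 8) * (1 + 2 / decayRate)) + decayConst, by positivity,
    decayRate / 4, by positivity, fun m₀ M K φ hM0 hφ hweak hflux hM x hx => ?_⟩
  rw [closure_cylFrom] at hφ
  exact IsSlipSolution.norm3_grad3_sub_le ⟨hφ, hweak⟩ hM hM0 hflux hx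

/-- exponential convergence of incompressible potential flow in a flat
semi-infinite cylinder: a bounded weak solution of Δφ = 0 with slip condition and
flux m₀ through each cross-section satisfies |∇φ − (0,0,q₀)| ≤ C e^{−d(x₃−K)},
q₀ = m₀/π, with C, d depending only on M and m₀. -/
theorem incompressible_flat_exponential_rate
    (m₀ M : ℝ) (hM : 0 < M) :
    ∃ C > (0:ℝ), ∃ d > (0:ℝ), ∀ (K : ℝ) (φ : (Fin 3 → ℝ) → ℝ),
      ContDiffOn ℝ 1 φ (closure (cylFrom K)) →
      (∀ ψ : (Fin 3 → ℝ) → ℝ, ContDiff ℝ 1 ψ → HasCompactSupport ψ →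
        tsupport ψ ⊆ {x : Fin 3 → ℝ | K < x 2} →
        ∫ x in cylFrom K, ∑ i, grad3 φ x i * grad3 ψ x i = 0) →
      (∀ t : ℝ, K < t →
        ∫ x' in diskSet, grad3 φ (Fin.snoc x' t) 2 = m₀) →
      (∀ x ∈ cylFrom K, norm3 (grad3 φ x) ≤ M) →
      ∀ x ∈ cylFrom K, K + 1 < x 2 →
        norm3 (grad3 φ x - ![0, 0, m₀ / π]) ≤ C * Real.exp (-d * (x 2 - K)) := by
  obtain ⟨C, hC, d, hd, hdecay⟩ := incompressible_flat_exponential_rate_general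
  exact ⟨C * M, mul_pos hC hM, d, hd, fun K φ hφ hweak hflux hbound x hx _ =>
    hdecay m₀ M K φ hM hφ hweak hflux hbound x hx⟩
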